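/- Let X be a Banach function space over a finite measure space and m : Σ → X a σ-additive vector measure. Assume: (a) X has the weak Banach-Saks property; (b) both X and X* have the subsequence splitting property; (c) m is separable and positive, i.e. m(A) ∈ X⁺ for every A ∈ Σ; (d) the range m(Σ) of m has uniformly a.c. norm in X. Then the Banach function space L¹(m), regarded as a B.f.s. over a Rybakov control measure, has both the subsequence splitting property and the weak Banach-Saks property. -/

import Mathlib

open MeasureTheory Filter Topology
open scoped ENNReal

noncomputable section

namespace Paper

variable {Ω : Type*} [MeasurableSpace Ω]
variable {X : Type*} [NormedAddCommGroup X] [NormedSpace ℝ X]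

/-- The signed measure `x* ∘ m` for a functional `x*` and vector measure `m`. -/
def dualApply (m : VectorMeasure Ω X) (x : X →L[ℝ] ℝ) : SignedMeasure Ω :=
  m.mapRange x.toLinearMap.toAddMonoidHom x.continuous

/-- The semivariation `‖m‖(A)` of a vector measure. -/
def semivar (m : VectorMeasure Ω X) (A : Set Ω) : ℝ≥0∞ :=
  ⨆ x : {x : X →L[ℝ] ℝ // ‖x‖ ≤ 1}, (dualApply m x.1).totalVariation A

/-- `P` holds `‖m‖`-almost everywhere. -/
def MAE (m : VectorMeasure Ω X) (P : Ω → Prop) : Prop :=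
  ∃ N : Set Ω, MeasurableSet N ∧ semivar m N = 0 ∧ ∀ ω ∉ N, P ω

/-- The integral `∫_A f ds` of a real function with respect to a signed measure. -/
def sIntegral (s : SignedMeasure Ω) (f : Ω → ℝ) (A : Set Ω) : ℝ :=
  (∫ ω in A, f ω ∂s.toJordanDecomposition.posPart) -
    ∫ ω in A, f ω ∂s.toJordanDecomposition.negPart

/-- `f` is integrable with respect to the vector measure `m` (Bartle-Dunford-Schwartz). -/
def MIntegrable (m : VectorMeasure Ω X) (f : Ω → ℝ) : Prop :=
  Measurable f ∧
  (∀ x : X →L[ℝ] ℝ, Integrable f ((dualApply m x).totalVariation)) ∧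
  (∀ A : Set Ω, MeasurableSet A →
    ∃ v : X, ∀ x : X →L[ℝ] ℝ, x v = sIntegral (dualApply m x) f A)

open Classical in
/-- The vector integral `∫_A f dm ∈ X`. -/
def mIntegral (m : VectorMeasure Ω X) (f : Ω → ℝ) (A : Set Ω) : X :=
  if h : ∃ v : X, ∀ x : X →L[ℝ] ℝ, x v = sIntegral (dualApply m x) f A then h.choose
  else 0

/-- The norm of `L¹(m)`: `‖f‖ = sup_{‖x*‖ ≤ 1} ∫ |f| d|x*m|`. -/
def mNorm (m : VectorMeasure Ω X) (f : Ω → ℝ) : ℝ :=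
  ⨆ x : {x : X →L[ℝ] ℝ // ‖x‖ ≤ 1}, ∫ ω, |f ω| ∂(dualApply m x.1).totalVariation

/-- The vector measure `m` is separable: the pseudometric space `(Σ, d_m)`,
`d_m(A,B) = ‖m‖(A △ B)`, is separable. -/
def SeparableVM (m : VectorMeasure Ω X) : Prop :=
  ∃ D : Set (Set Ω), D.Countable ∧ (∀ B ∈ D, MeasurableSet B) ∧
    ∀ A : Set Ω, MeasurableSet A → ∀ ε : ℝ, 0 < ε →
      ∃ B ∈ D, semivar m (symmDiff A B) < ENNReal.ofReal ε

section FunctionSpace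

variable {S : Type*} [MeasurableSpace S]

/-- `T` is a bounded linear functional on the function space determined by the
membership predicate `mem` and the norm `nrm`. -/
def IsBddLinFunctional (mem : (S → ℝ) → Prop) (nrm : (S → ℝ) → ℝ)
    (T : (S → ℝ) → ℝ) : Prop :=
  (∀ f g, mem f → mem g → T (f + g) = T f + T g) ∧
  (∀ (c : ℝ) (f), mem f → T (c • f) = c * T f) ∧
  (∃ C : ℝ, ∀ f, mem f → |T f| ≤ C * nrm f)

/-- `f` is a weakly null sequence in the function space `(mem, nrm)`. -/
def WeaklyNullSeq (mem : (S → ℝ) → Prop) (nrm : (S → ℝ) → ℝ) (f : ℕ → S → ℝ) : Prop :=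
  ∀ T : (S → ℝ) → ℝ, IsBddLinFunctional mem nrm T →
    Tendsto (fun n => T (f n)) atTop (nhds 0)

/-- The set `K` has uniformly absolutely continuous norm in the function space with
norm `nrm` over the measure `μ`. -/
def UnifACNorm (μ : Measure S) (nrm : (S → ℝ) → ℝ) (K : Set (S → ℝ)) : Prop :=
  ∀ ε : ℝ, 0 < ε → ∃ δ : ℝ, 0 < δ ∧ ∀ A : Set S, MeasurableSet A →
    μ A < ENNReal.ofReal δ → ∀ f ∈ K, nrm (A.indicator f) ≤ ε

/-- The subsequence splitting property for the function space `(mem, nrm)` over `μ`. -/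
def HasSSP (μ : Measure S) (mem : (S → ℝ) → Prop) (nrm : (S → ℝ) → ℝ) : Prop :=
  ∀ f : ℕ → S → ℝ, (∀ n, mem (f n)) → (∃ C : ℝ, ∀ n, nrm (f n) ≤ C) →
    ∃ σ : ℕ → ℕ, StrictMono σ ∧
      ∃ g h : ℕ → S → ℝ,
        (∀ n, mem (g n)) ∧ (∀ n, mem (h n)) ∧
        (∀ n, f (σ n) = g n + h n) ∧
        (∀ n, (fun s => g n s * h n s) =ᵐ[μ] 0) ∧
        UnifACNorm μ nrm (Set.range g) ∧
        (∀ i j, i ≠ j → (fun s => h i s * h j s) =ᵐ[μ] 0)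

/-- The weak Banach-Saks property for the function space `(mem, nrm)`. -/
def HasWBS (mem : (S → ℝ) → Prop) (nrm : (S → ℝ) → ℝ) : Prop :=
  ∀ f : ℕ → S → ℝ, (∀ n, mem (f n)) → WeaklyNullSeq mem nrm f →
    ∃ σ : ℕ → ℕ, StrictMono σ ∧
      Tendsto (fun n : ℕ => nrm ((n : ℝ)⁻¹ • ∑ k ∈ Finset.range n, f (σ k))) atTop (nhds 0)

end FunctionSpace

/-- A Banach function space over `(S, μ)`: an (abstract) normed space `X` together with
a linear embedding `J` into measurable functions on `S`, separating points modulo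
`μ`-null sets and satisfying the ideal property. -/
structure BFS (S : Type*) [MeasurableSpace S] (μ : Measure S)
    (X : Type*) [NormedAddCommGroup X] [NormedSpace ℝ X] where
  J : X →ₗ[ℝ] (S → ℝ)
  aemeasurable : ∀ x : X, AEMeasurable (J x) μ
  eq_zero : ∀ x : X, J x =ᵐ[μ] 0 → x = 0
  ideal : ∀ (x : X) (g : S → ℝ), AEMeasurable g μ →
    (∀ᵐ s ∂μ, |g s| ≤ |J x s|) → ∃ y : X, J y =ᵐ[μ] g ∧ ‖y‖ ≤ ‖x‖

variable {S : Type*} [MeasurableSpace S] {μ : Measure S}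

/-- The set `K ⊆ X` has uniformly absolutely continuous norm in the B.f.s. `X`. -/
def BFS.UnifAC (B : BFS S μ X) (K : Set X) : Prop :=
  ∀ ε : ℝ, 0 < ε → ∃ δ : ℝ, 0 < δ ∧ ∀ A : Set S, MeasurableSet A →
    μ A < ENNReal.ofReal δ → ∀ x ∈ K, ∀ y : X, B.J y =ᵐ[μ] A.indicator (B.J x) → ‖y‖ ≤ ε

/-- The B.f.s. `X` has absolutely continuous norm. -/
def BFS.ACNorm (B : BFS S μ X) : Prop :=
  ∀ x : X, ∀ ε : ℝ, 0 < ε → ∃ δ : ℝ, 0 < δ ∧ ∀ A : Set S, MeasurableSet A →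
    μ A < ENNReal.ofReal δ → ∀ y : X, B.J y =ᵐ[μ] A.indicator (B.J x) → ‖y‖ ≤ ε

/-- The subsequence splitting property for the B.f.s. `X`. -/
def BFS.SSP (B : BFS S μ X) : Prop :=
  ∀ f : ℕ → X, (∃ C : ℝ, ∀ n, ‖f n‖ ≤ C) →
    ∃ σ : ℕ → ℕ, StrictMono σ ∧
      ∃ g h : ℕ → X,
        (∀ n, f (σ n) = g n + h n) ∧
        (∀ n, (fun s => B.J (g n) s * B.J (h n) s) =ᵐ[μ] 0) ∧
        B.UnifAC (Set.range g) ∧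
        (∀ i j, i ≠ j → (fun s => B.J (h i) s * B.J (h j) s) =ᵐ[μ] 0)

/-- The weak Banach-Saks property for a normed space `Z`: every weakly null sequence has a
subsequence whose arithmetic means converge to zero in norm. -/
def WeakBanachSaks (Z : Type*) [NormedAddCommGroup Z] [NormedSpace ℝ Z] : Prop :=
  ∀ z : ℕ → Z, (∀ φ : Z →L[ℝ] ℝ, Tendsto (fun n => φ (z n)) atTop (nhds 0)) →
    ∃ σ : ℕ → ℕ, StrictMono σ ∧
      Tendsto (fun n : ℕ => ‖(n : ℝ)⁻¹ • ∑ k ∈ Finset.range n, z (σ k)‖) atTop (nhds 0)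


section BFSlemmas
variable {S : Type*} [MeasurableSpace S] {μ : Measure S}
variable {X : Type*} [NormedAddCommGroup X] [NormedSpace ℝ X]

theorem BFS.eq_of_ae (B : BFS S μ X) {x y : X} (h : B.J x =ᵐ[μ] B.J y) : x = y := by
  have : x - y = 0 := B.eq_zero _ (by filter_upwards [h] with s hs; simp [hs])
  exact sub_eq_zero.1 this

theorem BFS.norm_le (B : BFS S μ X) {x y : X} (h : ∀ᵐ s ∂μ, |B.J x s| ≤ |B.J y s|) :
    ‖x‖ ≤ ‖y‖ := by
  obtain ⟨z, hz, hn⟩ := B.ideal y (B.J x) (B.aemeasurable x) h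
  rwa [B.eq_of_ae hz] at hn

theorem BFS.exists_abs (B : BFS S μ X) (x : X) :
    ∃ y, (B.J y =ᵐ[μ] fun s => |B.J x s|) ∧ ‖y‖ ≤ ‖x‖ :=
  B.ideal x _ (B.aemeasurable x).abs (by simp)

theorem BFS.exists_ind (B : BFS S μ X) {A : Set S} (hA : MeasurableSet A) (x : X) :
    ∃ y, B.J y =ᵐ[μ] A.indicator (B.J x) := by
  obtain ⟨y, h, -⟩ := B.ideal x (A.indicator (B.J x)) ((B.aemeasurable x).indicator hA) (by
    refine Eventually.of_forall fun s => ?_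
    by_cases h : s ∈ A <;> simp [h])
  exact ⟨y, h⟩

theorem BFS.nonneg_of_tendsto (B : BFS S μ X) {u : ℕ → X} {x : X}
    (hu : ∀ᶠ n in atTop, ∀ᵐ s ∂μ, 0 ≤ B.J (u n) s) (h : Tendsto u atTop (𝓝 x)) :
    ∀ᵐ s ∂μ, 0 ≤ B.J x s := by
  obtain ⟨y, hy, -⟩ := B.ideal x (fun s => max (-(B.J x s)) 0)
    ((B.aemeasurable x).neg.max aemeasurable_const) (by
      refine Eventually.of_forall fun s => ?_
      rw [abs_of_nonneg (le_max_right _ _)]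
      exact max_le (neg_le_abs _) (abs_nonneg _))
  have h1 : ∀ᶠ n in atTop, ‖y‖ ≤ ‖u n - x‖ := by
    filter_upwards [hu] with n hn
    apply B.norm_le
    filter_upwards [hn, hy] with s h1 h2
    rw [h2, abs_of_nonneg (le_max_right _ _), map_sub, Pi.sub_apply]
    refine max_le ?_ (abs_nonneg _)
    exact le_trans (by linarith) (le_abs_self _)
  have h2 : Tendsto (fun n => ‖u n - x‖) atTop (𝓝 0) := by
    simpa using (h.sub_const x).norm
  have h3 : ‖y‖ ≤ 0 := ge_of_tendsto h2 h1
  have h4 : y = 0 := by simpa using h3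
  filter_upwards [hy] with s hs
  rw [h4] at hs
  simp only [map_zero, Pi.zero_apply] at hs
  have := le_max_left (-(B.J x s)) 0
  linarith

theorem tail_measure [IsFiniteMeasure μ] {f : S → ℝ} (hf : AEMeasurable f μ) {δ : ℝ} (hδ : 0 < δ) :
    ∃ R : ℕ, μ {s | (R : ℝ) < f s} < ENNReal.ofReal δ := by
  have h : Tendsto (fun n : ℕ => μ {s | (n : ℝ) < f s}) atTop
      (𝓝 (μ (⋂ n : ℕ, {s | (n : ℝ) < f s}))) := by
    apply tendsto_measure_iInter_atTop
    · intro n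
      exact nullMeasurableSet_lt aemeasurable_const hf
    · intro a b hab s hs
      have : (a : ℝ) ≤ b := by exact_mod_cast hab
      exact lt_of_le_of_lt this hs
    · exact ⟨0, measure_ne_top _ _⟩
  have he : (⋂ n : ℕ, {s | (n : ℝ) < f s}) = ∅ := by
    ext s
    simp only [Set.mem_iInter, Set.mem_setOf_eq, Set.mem_empty_iff_false, iff_false, not_forall,
      not_lt]
    exact exists_nat_ge (f s)
  rw [he, measure_empty] at h
  exact (h.eventually (gt_mem_nhds (ENNReal.ofReal_pos.2 hδ))).exists

theorem small_measure [IsFiniteMeasure μ] {f : S → ℝ} (hf : AEMeasurable f μ) {δ : ℝ} (hδ : 0 < δ) :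
    ∃ θ : ℝ, 0 < θ ∧ μ {s | 0 < f s ∧ f s < θ} < ENNReal.ofReal δ := by
  obtain ⟨R, hR⟩ := tail_measure (μ := μ) hf.inv hδ
  refine ⟨((R : ℝ) + 1)⁻¹, by positivity, lt_of_le_of_lt (measure_mono ?_) hR⟩
  rintro s ⟨h1, h2⟩
  simp only [Set.mem_setOf_eq, Pi.inv_apply]
  have : (R : ℝ) + 1 < (f s)⁻¹ := by
    rw [lt_inv_comm₀ (by positivity) h1]; exact h2
  linarith

theorem BFS.bounded_in_measure [CompleteSpace X] [IsFiniteMeasure μ] (B : BFS S μ X) {F : ℕ → X}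
    {C : ℝ} (hF : ∀ n, ‖F n‖ ≤ C) {δ : ℝ} (hδ : 0 < δ) :
    ∃ R : ℝ, 0 < R ∧ ∀ n, μ {s | R < |B.J (F n) s|} ≤ ENNReal.ofReal δ := by
  by_contra hcon
  push Not at hcon
  choose N hN using fun j : ℕ => hcon ((4 : ℝ) ^ j) (by positivity)
  choose y hy hyn using fun j : ℕ => B.exists_abs (F (N j))
  let a : ℕ → X := fun j => ((1 / 2 : ℝ) ^ j) • y j
  have ha : Summable a := by
    apply Summable.of_norm
    refine Summable.of_nonneg_of_le (fun _ => norm_nonneg _) (fun j => ?_)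
      ((summable_geometric_two).mul_right C)
    simp only [a, norm_smul, norm_pow]
    rw [Real.norm_of_nonneg (by norm_num : (0 : ℝ) ≤ 1 / 2)]
    gcongr
    exact (hyn j).trans (hF _)
  have hpos : ∀ j, ∀ᵐ s ∂μ, 0 ≤ B.J (a j) s := fun j => by
    filter_upwards [hy j] with s hs
    simp only [a, map_smul, Pi.smul_apply, hs, smul_eq_mul]
    positivity
  have hle : ∀ j, ∀ᵐ s ∂μ, 0 ≤ B.J ((∑' i, a i) - a j) s := fun j => by
    apply B.nonneg_of_tendsto (u := fun n => ∑ i ∈ Finset.range n, a i - a j) _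
      (ha.hasSum.tendsto_sum_nat.sub_const _)
    filter_upwards [eventually_gt_atTop j] with n hn
    have : ∀ᵐ s ∂μ, ∀ j, 0 ≤ B.J (a j) s := ae_all_iff.2 hpos
    filter_upwards [this] with s hs
    rw [map_sub, map_sum, Pi.sub_apply, Finset.sum_apply]
    have := Finset.single_le_sum (f := fun i => B.J (a i) s) (fun i _ => hs i)
      (Finset.mem_range.2 hn)
    simpa using this
  obtain ⟨R, hR⟩ := tail_measure (μ := μ) (B.aemeasurable (∑' i, a i)) hδ
  have h4 : ∀ j : ℕ, μ {s | (4 : ℝ) ^ j < |B.J (F (N j)) s|} ≤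
      μ {s | (2 : ℝ) ^ j < B.J (∑' i, a i) s} := fun j => by
    apply measure_mono_ae
    filter_upwards [hle j, hy j] with s h1 h2 h3
    change (4 : ℝ) ^ j < _ at h3
    change (2 : ℝ) ^ j < _
    rw [map_sub, Pi.sub_apply] at h1
    simp only [a, map_smul, Pi.smul_apply, h2, smul_eq_mul] at h1
    have h5 : (1 / 2 : ℝ) ^ j * 4 ^ j = 2 ^ j := by rw [← mul_pow]; norm_num
    have h6 : (1 / 2 : ℝ) ^ j * 4 ^ j < (1 / 2 : ℝ) ^ j * |B.J (F (N j)) s| := by gcongr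
    simp only [a] at *
    linarith
  have h5 : μ {s | (2 : ℝ) ^ R < B.J (∑' i, a i) s} ≤ μ {s | (R : ℝ) < B.J (∑' i, a i) s} := by
    apply measure_mono
    intro s hs
    have : (R : ℝ) < 2 ^ R := by exact_mod_cast R.lt_two_pow_self
    exact this.trans hs
  exact absurd (hN R) (not_lt.2 (((h4 R).trans h5).trans hR.le))

end BFSlemmas

section Core
variable {S : Type*} [MeasurableSpace S] {μ : Measure S}
variable {X : Type*} [NormedAddCommGroup X] [NormedSpace ℝ X]

theorem tendsto_measure_disj [IsFiniteMeasure μ] {E : ℕ → Set S} (hE : ∀ n, MeasurableSet (E n))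
    (hd : ∀ i j, i ≠ j → μ (E i ∩ E j) = 0) : Tendsto (fun n => μ (E n)) atTop (𝓝 0) := by
  apply ENNReal.tendsto_atTop_zero_of_tsum_ne_top
  have h := tsum_meas_le_meas_iUnion_of_disjoint₀ μ (fun n => (hE n).nullMeasurableSet)
    (fun i j hij => hd i j hij)
  exact ne_top_of_le_ne_top (measure_ne_top μ _) h

theorem count_lemma [IsFiniteMeasure μ] {V : ℕ → Set S} {F : S → ℝ} {R c d : ℝ}
    (hF : AEMeasurable F μ)
    (hc : 0 < c) (hR : 0 < R) {K : ℕ}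
    (hV : ∀ k < K, MeasurableSet (V k)) (hVd : ∀ k < K, d / 2 ≤ μ.real (V k))
    (hFR : μ.real {s | R < F s} ≤ d / 4)
    (hsum : ∀ᵐ s ∂μ, ∑ k ∈ Finset.range K, (V k).indicator (fun _ => c) s ≤ F s) :
    K * (d / 4) * c ≤ R * μ.real Set.univ := by
  let W : Set S := {s | F s ≤ R}
  have hW : NullMeasurableSet W μ := nullMeasurableSet_le hF aemeasurable_const
  have h1 : ∀ k < K, d / 4 ≤ μ.real (V k ∩ W) := fun k hk => by
    have h2 : μ.real (V k) ≤ μ.real ((V k ∩ W) ∪ {s | R < F s}) := by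
      apply measureReal_mono
      · intro s hs
        by_cases h : F s ≤ R
        · exact Or.inl ⟨hs, h⟩
        · exact Or.inr (not_le.1 h)
      · exact measure_ne_top _ _
    have h3 := measureReal_union_le (μ := μ) (V k ∩ W) {s | R < F s}
    have := hVd k hk
    linarith
  have h2 : ∫ s in W, ∑ k ∈ Finset.range K, (V k).indicator (fun _ => c) s ∂μ
      ≤ ∫ s in W, R ∂μ := by
    apply integral_mono_ae
    · apply integrable_finsetSum
      intro k hk
      exact (integrable_const c).indicator (hV k (Finset.mem_range.1 hk))
    · exact integrable_const _
    · have h5 := ae_restrict_of_ae (s := W) hsum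
      have h6 : ∀ᵐ s ∂(μ.restrict W), s ∈ W := ae_restrict_mem₀ hW
      filter_upwards [h5, h6] with s a b
      exact a.trans b
  rw [integral_finsetSum] at h2
  · have h7 : ∀ k ∈ Finset.range K, d / 4 * c ≤
        ∫ s in W, (V k).indicator (fun _ => c) s ∂μ := fun k hk => by
      have hk' := Finset.mem_range.1 hk
      rw [integral_indicator (hV k hk'), Measure.restrict_restrict (hV k hk'), setIntegral_const,
        smul_eq_mul]
      have := h1 k hk'
      gcongr
    have h8 := Finset.sum_le_sum h7
    rw [Finset.sum_const, Finset.card_range, nsmul_eq_mul] at h8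
    rw [setIntegral_const, smul_eq_mul] at h2
    have h9 : μ.real W ≤ μ.real Set.univ := measureReal_mono (Set.subset_univ _)
    have h10 : μ.real W * R ≤ μ.real Set.univ * R := by gcongr
    linarith
  · intro k hk
    exact (integrable_const c).indicator (hV k (Finset.mem_range.1 hk))

theorem BFS.core [CompleteSpace X] [IsFiniteMeasure μ] (B : BFS S μ X) {e : X}
    (he : ∀ᵐ s ∂μ, 0 ≤ B.J e s) (heac : B.UnifAC {e}) {F G H : ℕ → X} {C : ℝ}
    (hFC : ∀ n, ‖F n‖ ≤ C) (hFGH : ∀ n, F n = G n + H n)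
    (hGH : ∀ n, (fun s => B.J (G n) s * B.J (H n) s) =ᵐ[μ] 0)
    (hG : B.UnifAC (Set.range G))
    (hH : ∀ i j, i ≠ j → (fun s => B.J (H i) s * B.J (H j) s) =ᵐ[μ] 0)
    {u : ℕ → ℕ → X} {c : ℕ → ℝ}
    (hu0 : ∀ n k, ∀ᵐ s ∂μ, 0 ≤ B.J (u n k) s)
    (hu1 : ∀ n k, ∀ᵐ s ∂μ, B.J (u n k) s ≤ c k * B.J e s)
    (hu2 : ∀ n K, ∀ᵐ s ∂μ, ∑ k ∈ Finset.range K, B.J (u n k) s ≤ B.J (F n) s)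
    {ε : ℝ} (hε : 0 < ε) :
    ∃ K : ℕ, ∀ᶠ n in atTop, ∃ k < K, ‖u n k‖ ≤ ε := by
  -- supports
  let Hm : ℕ → S → ℝ := fun n => (B.aemeasurable (H n)).mk
  have hHm : ∀ n, B.J (H n) =ᵐ[μ] Hm n := fun n => (B.aemeasurable (H n)).ae_eq_mk
  let E : ℕ → Set S := fun n => {s | Hm n s ≠ 0}
  have hE : ∀ n, MeasurableSet (E n) := fun n =>
    (measurableSet_eq_fun (B.aemeasurable (H n)).measurable_mk measurable_const).compl
  have hE0 : Tendsto (fun n => μ (E n)) atTop (𝓝 0) := by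
    apply tendsto_measure_disj hE
    intro i j hij
    have : ∀ᵐ s ∂μ, ¬ (s ∈ E i ∩ E j) := by
      filter_upwards [hH i j hij, hHm i, hHm j] with s h1 h2 h3
      rintro ⟨h4, h5⟩
      simp only [Pi.zero_apply, mul_eq_zero, h2, h3] at h1
      exact h1.elim h4 h5
    simpa [ae_iff] using this
  have hEc : ∀ n, ∀ᵐ s ∂μ, s ∉ E n → B.J (F n) s = B.J (G n) s := fun n => by
    filter_upwards [hHm n] with s h1 h2
    have h3 : Hm n s = 0 := by simpa [E] using h2
    rw [hFGH n, map_add, Pi.add_apply, h1, h3, add_zero]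
  let em : S → ℝ := (B.aemeasurable e).mk
  have hem : B.J e =ᵐ[μ] em := (B.aemeasurable e).ae_eq_mk
  have hemm : Measurable em := (B.aemeasurable e).measurable_mk
  let um : ℕ → ℕ → S → ℝ := fun n k => (B.aemeasurable (u n k)).mk
  have hum : ∀ n k, B.J (u n k) =ᵐ[μ] um n k := fun n k => (B.aemeasurable (u n k)).ae_eq_mk
  have humm : ∀ n k, Measurable (um n k) := fun n k => (B.aemeasurable (u n k)).measurable_mk
  obtain ⟨d, hd, hGd⟩ := hG (ε / 4) (by positivity)
  let θ0 : ℝ := ε / (4 * (‖e‖ + 1))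
  have hθ0 : 0 < θ0 := by positivity
  have hθ0e : θ0 * ‖e‖ ≤ ε / 4 := by
    simp only [θ0]
    rw [div_mul_eq_mul_div, div_le_div_iff₀ (by positivity) (by positivity)]
    nlinarith [norm_nonneg e]
  obtain ⟨θ, hθ, hθd⟩ := small_measure (μ := μ) (B.aemeasurable e) (half_pos hd)
  obtain ⟨R, hR, hRd⟩ := B.bounded_in_measure hFC (δ := d / 4) (by positivity)
  -- the sets are large
  have large : ∀ K : ℕ, ∀ᶠ n in atTop, ∀ k < K, ε < ‖u n k‖ →
      d / 2 ≤ μ.real {s | θ0 * θ ≤ um n k s} := by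
    intro K
    -- bound for c
    obtain ⟨c', hc', hcc'⟩ : ∃ c' : ℝ, 0 < c' ∧ ∀ k < K, c k ≤ c' := by
      refine ⟨1 + ∑ k ∈ Finset.range K, |c k|, by positivity, fun k hk => ?_⟩
      have := Finset.single_le_sum (f := fun k => |c k|) (fun i _ => abs_nonneg _)
        (Finset.mem_range.2 hk)
      have h2 := le_abs_self (c k)
      linarith
    obtain ⟨d', hd', hed'⟩ := heac (ε / 4 / c') (by positivity)
    filter_upwards [hE0.eventually (gt_mem_nhds (ENNReal.ofReal_pos.2 hd'))] with n hn k hk huk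
    let Cs : Set S := {s | θ0 * em s < um n k s} ∩ (E n)ᶜ
    have hCs : MeasurableSet Cs :=
      (measurableSet_lt (hemm.const_mul θ0) (humm n k)).inter (hE n).compl
    obtain ⟨a1, ha1⟩ := B.exists_ind (hE n) (u n k)
    obtain ⟨a2, ha2⟩ := B.exists_ind hCs (u n k)
    obtain ⟨a3, ha3⟩ := B.exists_ind ((hE n).union hCs).compl (u n k)
    obtain ⟨e1, he1⟩ := B.exists_ind (hE n) e
    obtain ⟨g1, hg1⟩ := B.exists_ind hCs (G n)
    have hsplit : u n k = a1 + a2 + a3 := by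
      apply B.eq_of_ae
      filter_upwards [ha1, ha2, ha3] with s h1 h2 h3
      simp only [map_add, Pi.add_apply, h1, h2, h3]
      by_cases hs : s ∈ E n
      · have : s ∉ Cs := fun h => h.2 hs
        simp [hs, this]
      · by_cases hs' : s ∈ Cs <;> simp [hs, hs']
    have hn1 : ‖a1‖ ≤ ε / 4 := by
      have h1 : ‖a1‖ ≤ ‖c' • e1‖ := by
        apply B.norm_le
        filter_upwards [ha1, he1, hu0 n k, hu1 n k, he] with s h1 h2 h3 h4 h5
        rw [map_smul, Pi.smul_apply, h1, h2, smul_eq_mul]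
        by_cases hs : s ∈ E n
        · simp only [hs, Set.indicator_of_mem]
          rw [abs_of_nonneg h3, abs_of_nonneg (by positivity)]
          refine h4.trans ?_
          have := hcc' k hk
          gcongr
        · simp [hs]
      have h2 := hed' (E n) (hE n) hn e rfl e1 he1
      rw [norm_smul, Real.norm_of_nonneg hc'.le] at h1
      refine h1.trans ?_
      calc c' * ‖e1‖ ≤ c' * (ε / 4 / c') := by gcongr
        _ = ε / 4 := by field_simp
    have hn3 : ‖a3‖ ≤ ε / 4 := by
      have h1 : ‖a3‖ ≤ ‖θ0 • e‖ := by
        apply B.norm_le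
        filter_upwards [ha3, hu0 n k, he, hum n k, hem] with s h1 h3 h5 h6 h7
        rw [map_smul, Pi.smul_apply, h1, smul_eq_mul]
        by_cases hs : s ∈ (E n ∪ Cs)ᶜ
        · simp only [hs, Set.indicator_of_mem]
          rw [abs_of_nonneg h3, abs_of_nonneg (by positivity)]
          simp only [Set.compl_union, Set.mem_inter_iff, Set.mem_compl_iff] at hs
          have h8 : ¬ (θ0 * em s < um n k s) := fun h => hs.2 ⟨h, hs.1⟩
          rw [h6, h7]
          exact not_lt.1 h8
        · simp only [hs, Set.indicator_of_notMem, not_false_eq_true, abs_zero]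
          positivity
      rw [norm_smul, Real.norm_of_nonneg hθ0.le] at h1
      exact h1.trans hθ0e
    have hn2 : ‖a2‖ ≤ ‖g1‖ := by
      apply B.norm_le
      filter_upwards [ha2, hg1, hEc n, ae_all_iff.2 (hu0 n), hu2 n (k + 1)] with s h1 h2 h3 h4 h5
      rw [h1, h2]
      by_cases hs : s ∈ Cs
      · simp only [hs, Set.indicator_of_mem]
        rw [← h3 hs.2, abs_of_nonneg (h4 k)]
        refine le_trans ?_ (le_abs_self _)
        refine le_trans ?_ h5
        exact Finset.single_le_sum (f := fun k => B.J (u n k) s) (fun i _ => h4 i)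
          (Finset.self_mem_range_succ k)
      · simp [hs]
    have hbig : ¬ (μ Cs < ENNReal.ofReal d) := by
      intro h
      have h1 := hGd Cs hCs h (G n) ⟨n, rfl⟩ g1 hg1
      have h2 : ‖u n k‖ ≤ ‖a1‖ + ‖a2‖ + ‖a3‖ := by
        rw [hsplit]; exact norm_add₃_le
      linarith
    have hbig' : d ≤ μ.real Cs := by
      rw [not_lt] at hbig
      exact (ENNReal.ofReal_le_iff_le_toReal (measure_ne_top _ _)).1 hbig
    have hsub : μ.real Cs ≤ μ.real {s | 0 < B.J e s ∧ B.J e s < θ} +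
        μ.real {s | θ0 * θ ≤ um n k s} := by
      refine le_trans ?_ (measureReal_union_le _ _)
      apply ENNReal.toReal_mono (measure_ne_top _ _)
      apply measure_mono_ae
      filter_upwards [hem, hum n k, hu1 n k, he] with s h1 h2 h3 h4 h5
      have h6 : θ0 * em s < um n k s := h5.1
      rw [← h1, ← h2] at h6
      have h7 : 0 < B.J e s := by
        rcases h4.lt_or_eq with h | h
        · exact h
        · rw [← h] at h3 h6
          simp only [mul_zero] at h3 h6
          linarith
      by_cases h8 : B.J e s < θ
      · exact Or.inl ⟨h7, h8⟩
      · right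
        change θ0 * θ ≤ um n k s
        rw [← h2]
        refine le_trans ?_ h6.le
        have := not_lt.1 h8
        gcongr
    have h9 : μ.real {s | 0 < B.J e s ∧ B.J e s < θ} ≤ d / 2 :=
      ENNReal.toReal_le_of_le_ofReal (by positivity) hθd.le
    linarith
  obtain ⟨K, hK⟩ := exists_nat_gt (R * μ.real Set.univ / ((d / 4) * (θ0 * θ)))
  refine ⟨K, ?_⟩
  filter_upwards [large K] with n hn
  by_contra hcon
  push Not at hcon
  have := count_lemma (μ := μ) (V := fun k => {s | θ0 * θ ≤ um n k s}) (F := B.J (F n)) (R := R)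
    (c := θ0 * θ) (d := d) (B.aemeasurable _) (by positivity) hR (K := K)
    (fun k _ => measurableSet_le measurable_const (humm n k))
    (fun k hk => hn k hk (hcon k hk)) ?_ ?_
  · rw [div_lt_iff₀ (by positivity)] at hK
    linarith
  · refine ENNReal.toReal_le_of_le_ofReal (by positivity) (le_trans (measure_mono ?_) (hRd n))
    intro s hs
    change R < B.J (F n) s at hs
    exact lt_of_lt_of_le hs (le_abs_self _)
  · filter_upwards [hu2 n K, ae_all_iff.2 (hu0 n), ae_all_iff.2 (hum n)] with s h1 h2 h3
    refine le_trans (Finset.sum_le_sum fun k _ => ?_) h1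
    by_cases hs : s ∈ {s | θ0 * θ ≤ um n k s}
    · rw [Set.indicator_of_mem hs, h3 k]; exact hs
    · rw [Set.indicator_of_notMem hs]; exact h2 k

end Core

section L1m
variable {S : Type*} [MeasurableSpace S] {μ : Measure S}
variable {X : Type*} [NormedAddCommGroup X] [NormedSpace ℝ X]
variable {Ω : Type*} [MeasurableSpace Ω]

/-- Standing assumptions: representation of the dual and positivity of `m`. -/
structure Ctx (B : BFS S μ X) (B' : BFS S μ (X →L[ℝ] ℝ)) (m : VectorMeasure Ω X) : Prop where
  rep : ∀ (φ : X →L[ℝ] ℝ) (x : X), φ x = ∫ s, B.J x s * B'.J φ s ∂μ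
  pos : ∀ A : Set Ω, MeasurableSet A → ∀ᵐ s ∂μ, 0 ≤ B.J (m A) s

variable {B : BFS S μ X} {B' : BFS S μ (X →L[ℝ] ℝ)} {m : VectorMeasure Ω X}

/-- positive functional -/
def PosF (B' : BFS S μ (X →L[ℝ] ℝ)) (φ : X →L[ℝ] ℝ) : Prop := ∀ᵐ s ∂μ, 0 ≤ B'.J φ s

theorem Ctx.apply_nonneg (c : Ctx B B' m) {φ : X →L[ℝ] ℝ} (hφ : PosF B' φ) {x : X}
    (hx : ∀ᵐ s ∂μ, 0 ≤ B.J x s) : 0 ≤ φ x := by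
  rw [c.rep]
  apply integral_nonneg_of_ae
  filter_upwards [hφ, hx] with s h1 h2
  exact mul_nonneg h2 h1

theorem exists_absF (B' : BFS S μ (X →L[ℝ] ℝ)) (φ : X →L[ℝ] ℝ) :
    ∃ ψ, PosF B' ψ ∧ ‖ψ‖ ≤ ‖φ‖ ∧ PosF B' (ψ - φ) ∧ PosF B' (ψ + φ) := by
  obtain ⟨ψ, h, hn⟩ := B'.exists_abs φ
  refine ⟨ψ, ?_, hn, ?_, ?_⟩
  · filter_upwards [h] with s hs
    rw [hs]; exact abs_nonneg _
  · filter_upwards [h] with s hs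
    rw [map_sub, Pi.sub_apply, hs]; linarith [le_abs_self (B'.J φ s)]
  · filter_upwards [h] with s hs
    rw [map_add, Pi.add_apply, hs]; linarith [neg_abs_le (B'.J φ s)]

theorem Ctx.nonneg_of_forall (c : Ctx B B' m) {v : X}
    (h : ∀ φ, PosF B' φ → 0 ≤ φ v) : ∀ᵐ s ∂μ, 0 ≤ B.J v s := by
  obtain ⟨w, hw, -⟩ := B.ideal v (fun s => max (-(B.J v s)) 0)
    ((B.aemeasurable v).neg.max aemeasurable_const) (by
      refine Eventually.of_forall fun s => ?_
      rw [abs_of_nonneg (le_max_right _ _)]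
      exact max_le (neg_le_abs _) (abs_nonneg _))
  have hw0 : w = 0 := by
    by_contra hne
    obtain ⟨φ, -, hφ⟩ := exists_dual_vector'' ℝ w
    obtain ⟨ψ, h1, -, h2, -⟩ := exists_absF B' φ
    have h3 : 0 ≤ (ψ - φ) w := c.apply_nonneg h2 (by
      filter_upwards [hw] with s hs
      rw [hs]; exact le_max_right _ _)
    have h4 : 0 < ψ w := by
      have : 0 < ‖w‖ := norm_pos_iff.2 hne
      simp only [ContinuousLinearMap.sub_apply, hφ] at h3
      have h5 : (RCLike.ofReal ‖w‖ : ℝ) = ‖w‖ := rfl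
      linarith
    let vm := (B.aemeasurable v).mk
    have hvm : B.J v =ᵐ[μ] vm := (B.aemeasurable v).ae_eq_mk
    have hZ : MeasurableSet {s | vm s < 0} :=
      measurableSet_lt (B.aemeasurable v).measurable_mk measurable_const
    obtain ⟨ρ, hρ⟩ := B'.exists_ind hZ ψ
    have hρp : PosF B' ρ := by
      filter_upwards [hρ, h1] with s h5 h6
      rw [h5]
      exact Set.indicator_apply_nonneg fun _ => h6
    have h7 := h ρ hρp
    have h8 : ρ v = - ψ w := by
      rw [c.rep, c.rep, ← integral_neg]
      apply integral_congr_ae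
      filter_upwards [hρ, hw, hvm] with s h5 h6 h7
      rw [h5, h6]
      by_cases hs : vm s < 0
      · rw [Set.indicator_of_mem (by exact hs), h7, max_eq_left (by linarith)]
        ring
      · rw [Set.indicator_of_notMem (by exact hs), h7, max_eq_right (by linarith)]
        ring
    linarith
  filter_upwards [hw] with s hs
  rw [hw0] at hs
  simp only [map_zero, Pi.zero_apply] at hs
  have := le_max_left (-(B.J v s)) 0
  linarith

theorem dualApply_apply (m : VectorMeasure Ω X) (φ : X →L[ℝ] ℝ) (A : Set Ω) :
    dualApply m φ A = φ (m A) := rfl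

theorem exists_hahn (s : SignedMeasure Ω) : ∃ i : Set Ω, MeasurableSet i ∧
    (∀ A, MeasurableSet A → s.toJordanDecomposition.posPart.real A = s (i ∩ A)) ∧
    (∀ A, MeasurableSet A → s.toJordanDecomposition.negPart.real A = - s (iᶜ ∩ A)) := by
  obtain ⟨i, h1, h2, h3, h4, h5⟩ := s.toJordanDecomposition_spec
  refine ⟨i, h1, fun A hA => ?_, fun A hA => ?_⟩
  · rw [h4, s.toMeasureOfZeroLE_real_apply h2 h1 hA]
  · rw [h5, s.toMeasureOfLEZero_real_apply h3 h1.compl hA]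

theorem Ctx.negPart_eq_zero (c : Ctx B B' m) {φ : X →L[ℝ] ℝ} (hφ : PosF B' φ) :
    (dualApply m φ).toJordanDecomposition.negPart = 0 := by
  obtain ⟨i, hi, -, h⟩ := exists_hahn (dualApply m φ)
  ext A hA
  have h1 := h A hA
  have h2 : 0 ≤ dualApply m φ (iᶜ ∩ A) := c.apply_nonneg hφ (c.pos _ (hi.compl.inter hA))
  have h3 : (dualApply m φ).toJordanDecomposition.negPart.real A = 0 :=
    le_antisymm (by linarith) measureReal_nonneg
  simpa [measureReal_def, ENNReal.toReal_eq_zero_iff] using h3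

theorem Ctx.tv_eq (c : Ctx B B' m) {φ : X →L[ℝ] ℝ} (hφ : PosF B' φ) :
    (dualApply m φ).totalVariation = (dualApply m φ).toJordanDecomposition.posPart := by
  rw [SignedMeasure.totalVariation, c.negPart_eq_zero hφ, add_zero]

theorem Ctx.tv_real (c : Ctx B B' m) {φ : X →L[ℝ] ℝ} (hφ : PosF B' φ) {A : Set Ω}
    (hA : MeasurableSet A) : (dualApply m φ).totalVariation.real A = φ (m A) := by
  have := (dualApply m φ).apply_eq_posPart_real_sub_negPart_real hA
  rw [c.negPart_eq_zero hφ] at this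
  rw [c.tv_eq hφ, ← dualApply_apply, this]
  simp

theorem Ctx.sIntegral_eq (c : Ctx B B' m) {φ : X →L[ℝ] ℝ} (hφ : PosF B' φ) (f : Ω → ℝ)
    (A : Set Ω) :
    sIntegral (dualApply m φ) f A = ∫ ω in A, f ω ∂(dualApply m φ).totalVariation := by
  rw [sIntegral, c.negPart_eq_zero hφ, c.tv_eq hφ]
  simp

theorem Ctx.tv_le (c : Ctx B B' m) {φ ψ : X →L[ℝ] ℝ} (hψ : PosF B' ψ)
    (h1 : PosF B' (ψ - φ)) (h2 : PosF B' (ψ + φ)) :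
    (dualApply m φ).totalVariation ≤ (dualApply m ψ).totalVariation := by
  rw [Measure.le_iff]
  intro A hA
  rw [← ENNReal.toReal_le_toReal (measure_ne_top _ _) (measure_ne_top _ _)]
  change (dualApply m φ).totalVariation.real A ≤ (dualApply m ψ).totalVariation.real A
  rw [c.tv_real hψ hA]
  obtain ⟨i, hi, hp, hn⟩ := exists_hahn (dualApply m φ)
  rw [SignedMeasure.totalVariation, measureReal_add_apply, hp A hA, hn A hA,
    dualApply_apply, dualApply_apply]
  have h3 := c.apply_nonneg h1 (c.pos _ (hi.inter hA))
  have h4 := c.apply_nonneg h2 (c.pos _ (hi.compl.inter hA))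
  have h5 : m A = m (i ∩ A) + m (iᶜ ∩ A) := by
    rw [← VectorMeasure.of_union _ (hi.inter hA) (hi.compl.inter hA), ← Set.union_inter_distrib_right,
      Set.union_compl_self, Set.univ_inter]
    exact (disjoint_compl_right).mono Set.inter_subset_left Set.inter_subset_left
  rw [h5, map_add]
  simp only [ContinuousLinearMap.sub_apply, ContinuousLinearMap.add_apply] at h3 h4
  linarith

/-! ### closure properties of integrable functions -/

theorem int_pos {s : SignedMeasure Ω} {f : Ω → ℝ} (h : Integrable f s.totalVariation) :
    Integrable f s.toJordanDecomposition.posPart :=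
  h.mono_measure (by rw [SignedMeasure.totalVariation]; exact Measure.le_add_right le_rfl)

theorem int_neg {s : SignedMeasure Ω} {f : Ω → ℝ} (h : Integrable f s.totalVariation) :
    Integrable f s.toJordanDecomposition.negPart :=
  h.mono_measure (by rw [SignedMeasure.totalVariation]; exact Measure.le_add_left le_rfl)

theorem sIntegral_add {s : SignedMeasure Ω} {f g : Ω → ℝ} (hf : Integrable f s.totalVariation)
    (hg : Integrable g s.totalVariation) (A : Set Ω) :
    sIntegral s (f + g) A = sIntegral s f A + sIntegral s g A := by
  simp only [sIntegral, Pi.add_apply]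
  rw [integral_add (int_pos hf).integrableOn (int_pos hg).integrableOn,
    integral_add (int_neg hf).integrableOn (int_neg hg).integrableOn]
  ring

theorem sIntegral_smul {s : SignedMeasure Ω} {f : Ω → ℝ} (r : ℝ) (A : Set Ω) :
    sIntegral s (r • f) A = r * sIntegral s f A := by
  simp only [sIntegral, Pi.smul_apply, smul_eq_mul]
  rw [integral_const_mul, integral_const_mul]
  ring

theorem sIntegral_indicator {s : SignedMeasure Ω} {f : Ω → ℝ} {A' : Set Ω} (hA' : MeasurableSet A')
    (A : Set Ω) : sIntegral s (A'.indicator f) A = sIntegral s f (A' ∩ A) := by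
  simp only [sIntegral]
  rw [integral_indicator hA', integral_indicator hA', Measure.restrict_restrict hA',
    Measure.restrict_restrict hA']

theorem MIntegrable.add {f g : Ω → ℝ} (hf : MIntegrable m f) (hg : MIntegrable m g) :
    MIntegrable m (f + g) := by
  refine ⟨hf.1.add hg.1, fun x => (hf.2.1 x).add (hg.2.1 x), fun A hA => ?_⟩
  obtain ⟨v, hv⟩ := hf.2.2 A hA
  obtain ⟨w, hw⟩ := hg.2.2 A hA
  exact ⟨v + w, fun x => by rw [map_add, hv, hw, sIntegral_add (hf.2.1 x) (hg.2.1 x)]⟩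

theorem MIntegrable.smul {f : Ω → ℝ} (r : ℝ) (hf : MIntegrable m f) :
    MIntegrable m (r • f) := by
  refine ⟨hf.1.const_smul r, fun x => (hf.2.1 x).smul r, fun A hA => ?_⟩
  obtain ⟨v, hv⟩ := hf.2.2 A hA
  exact ⟨r • v, fun x => by rw [map_smul, hv, sIntegral_smul, smul_eq_mul]⟩

theorem MIntegrable.indicator {f : Ω → ℝ} (hf : MIntegrable m f) {A' : Set Ω}
    (hA' : MeasurableSet A') : MIntegrable m (A'.indicator f) := by
  refine ⟨hf.1.indicator hA', fun x => (hf.2.1 x).indicator hA', fun A hA => ?_⟩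
  obtain ⟨v, hv⟩ := hf.2.2 (A' ∩ A) (hA'.inter hA)
  exact ⟨v, fun x => by rw [hv, sIntegral_indicator hA']⟩

theorem MIntegrable.const (r : ℝ) : MIntegrable m (fun _ => r) := by
  refine ⟨measurable_const, fun x => integrable_const _, fun A hA => ⟨r • m A, fun x => ?_⟩⟩
  rw [sIntegral, setIntegral_const, setIntegral_const, map_smul, ← dualApply_apply,
    SignedMeasure.apply_eq_posPart_real_sub_negPart_real _ hA]
  simp only [smul_eq_mul]
  ring

theorem MIntegrable.zero : MIntegrable m (0 : Ω → ℝ) := MIntegrable.const 0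

/-- Multiplication by the sign function of a set: `1` off `P` and `-1` on `P`. -/
def sgnMul (P : Set Ω) (f : Ω → ℝ) : Ω → ℝ := Pᶜ.indicator f + (-1 : ℝ) • P.indicator f

theorem sgnMul_of_mem {P : Set Ω} {ω : Ω} (h : ω ∈ P) (f : Ω → ℝ) : sgnMul P f ω = - f ω := by
  simp [sgnMul, h]

theorem sgnMul_of_notMem {P : Set Ω} {ω : Ω} (h : ω ∉ P) (f : Ω → ℝ) : sgnMul P f ω = f ω := by
  simp [sgnMul, h]

theorem abs_sgnMul (P : Set Ω) (f : Ω → ℝ) (ω : Ω) : |sgnMul P f ω| = |f ω| := by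
  by_cases h : ω ∈ P
  · rw [sgnMul_of_mem h, abs_neg]
  · rw [sgnMul_of_notMem h]

theorem sgnMul_add (P : Set Ω) (f g : Ω → ℝ) : sgnMul P (f + g) = sgnMul P f + sgnMul P g := by
  ext ω
  by_cases h : ω ∈ P
  · simp only [Pi.add_apply, sgnMul_of_mem h]; ring
  · simp only [Pi.add_apply, sgnMul_of_notMem h]

theorem sgnMul_smul (P : Set Ω) (r : ℝ) (f : Ω → ℝ) : sgnMul P (r • f) = r • sgnMul P f := by
  ext ω
  by_cases h : ω ∈ P
  · simp only [Pi.smul_apply, sgnMul_of_mem h, smul_eq_mul]; ring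
  · simp only [Pi.smul_apply, sgnMul_of_notMem h]

theorem MIntegrable.sgnMul {f : Ω → ℝ} (hf : MIntegrable m f) {P : Set Ω} (hP : MeasurableSet P) :
    MIntegrable m (sgnMul P f) :=
  (hf.indicator hP.compl).add ((hf.indicator hP).smul _)

theorem sgnMul_self (f : Ω → ℝ) : Paper.sgnMul {ω | f ω < 0} f = fun ω => |f ω| := by
  ext ω
  by_cases h : f ω < 0
  · rw [sgnMul_of_mem (by exact h), abs_of_neg h]
  · rw [sgnMul_of_notMem (by exact h), abs_of_nonneg (not_lt.1 h)]

theorem MIntegrable.abs {f : Ω → ℝ} (hf : MIntegrable m f) : MIntegrable m (fun ω => |f ω|) := by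
  rw [← sgnMul_self]
  exact hf.sgnMul (measurableSet_lt hf.1 measurable_const)

theorem MIntegrable.sum {ι : Type*} {f : ι → Ω → ℝ} (s : Finset ι) (hf : ∀ i ∈ s, MIntegrable m (f i)) :
    MIntegrable m (∑ i ∈ s, f i) := by
  classical
  induction s using Finset.induction_on with
  | empty => simpa using MIntegrable.zero
  | insert a s ha ih =>
    rw [Finset.sum_insert ha]
    exact (hf a (Finset.mem_insert_self _ _)).add
      (ih fun i hi => hf i (Finset.mem_insert_of_mem hi))

/-! ### the integral -/

/-- The full integral. -/
def II (m : VectorMeasure Ω X) (f : Ω → ℝ) : X := mIntegral m f Set.univ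

theorem II_spec {f : Ω → ℝ} (hf : MIntegrable m f) (φ : X →L[ℝ] ℝ) :
    φ (II m f) = sIntegral (dualApply m φ) f Set.univ := by
  have h := hf.2.2 Set.univ MeasurableSet.univ
  rw [II, mIntegral, dif_pos h]
  exact h.choose_spec φ

theorem II_add {f g : Ω → ℝ} (hf : MIntegrable m f) (hg : MIntegrable m g) :
    II m (f + g) = II m f + II m g := by
  rw [SeparatingDual.eq_iff_forall_dual_eq (R := ℝ)]
  intro φ
  rw [map_add, II_spec (hf.add hg), II_spec hf, II_spec hg, sIntegral_add (hf.2.1 φ) (hg.2.1 φ)]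

theorem II_smul {f : Ω → ℝ} (r : ℝ) (hf : MIntegrable m f) : II m (r • f) = r • II m f := by
  rw [SeparatingDual.eq_iff_forall_dual_eq (R := ℝ)]
  intro φ
  rw [map_smul, II_spec (hf.smul r), II_spec hf, sIntegral_smul, smul_eq_mul]

theorem II_zero : II m (0 : Ω → ℝ) = 0 := by
  have := II_smul (m := m) 0 MIntegrable.zero
  simpa using this

theorem II_const (r : ℝ) : II m (fun _ : Ω => r) = r • m Set.univ := by
  rw [SeparatingDual.eq_iff_forall_dual_eq (R := ℝ)]
  intro φ
  rw [II_spec (MIntegrable.const r), sIntegral, setIntegral_const, setIntegral_const, map_smul,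
    ← dualApply_apply, SignedMeasure.apply_eq_posPart_real_sub_negPart_real _ MeasurableSet.univ]
  simp only [smul_eq_mul]
  ring

theorem II_sum {ι : Type*} {f : ι → Ω → ℝ} (s : Finset ι) (hf : ∀ i ∈ s, MIntegrable m (f i)) :
    II m (∑ i ∈ s, f i) = ∑ i ∈ s, II m (f i) := by
  classical
  induction s using Finset.induction_on with
  | empty => simpa using II_zero
  | insert a s ha ih =>
    rw [Finset.sum_insert ha, Finset.sum_insert ha,
      II_add (hf a (Finset.mem_insert_self _ _))
        (MIntegrable.sum _ fun i hi => hf i (Finset.mem_insert_of_mem hi)),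
      ih fun i hi => hf i (Finset.mem_insert_of_mem hi)]

theorem Ctx.II_apply (c : Ctx B B' m) {φ : X →L[ℝ] ℝ} (hφ : PosF B' φ) {f : Ω → ℝ}
    (hf : MIntegrable m f) : φ (II m f) = ∫ ω, f ω ∂(dualApply m φ).totalVariation := by
  rw [II_spec hf, c.sIntegral_eq hφ, Measure.restrict_univ]

theorem Ctx.II_mono (c : Ctx B B' m) {f g : Ω → ℝ} (hf : MIntegrable m f) (hg : MIntegrable m g)
    (h : ∀ ω, f ω ≤ g ω) : ∀ᵐ s ∂μ, B.J (II m f) s ≤ B.J (II m g) s := by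
  have : ∀ᵐ s ∂μ, 0 ≤ B.J (II m g - II m f) s := c.nonneg_of_forall fun φ hφ => by
    rw [map_sub, c.II_apply hφ hf, c.II_apply hφ hg, sub_nonneg]
    exact integral_mono (hf.2.1 φ) (hg.2.1 φ) h
  filter_upwards [this] with s hs
  rw [map_sub, Pi.sub_apply] at hs
  linarith

theorem Ctx.II_nonneg (c : Ctx B B' m) {f : Ω → ℝ} (hf : MIntegrable m f)
    (h : ∀ ω, 0 ≤ f ω) : ∀ᵐ s ∂μ, 0 ≤ B.J (II m f) s := by
  have := c.II_mono MIntegrable.zero hf h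
  simpa [II_zero] using this

theorem Ctx.integral_tv_le (c : Ctx B B' m) {f : Ω → ℝ} (hf : MIntegrable m f) (φ : X →L[ℝ] ℝ) :
    ∫ ω, |f ω| ∂(dualApply m φ).totalVariation ≤ ‖φ‖ * ‖II m (fun ω => |f ω|)‖ := by
  obtain ⟨ψ, h0, hn, h1, h2⟩ := exists_absF B' φ
  calc ∫ ω, |f ω| ∂(dualApply m φ).totalVariation
      ≤ ∫ ω, |f ω| ∂(dualApply m ψ).totalVariation :=
        integral_mono_measure (c.tv_le h0 h1 h2) (Eventually.of_forall fun _ => abs_nonneg _)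
          (hf.2.1 ψ).abs
    _ = ψ (II m (fun ω => |f ω|)) := (c.II_apply h0 hf.abs).symm
    _ ≤ ‖ψ (II m (fun ω => |f ω|))‖ := le_abs_self _
    _ ≤ ‖ψ‖ * ‖II m (fun ω => |f ω|)‖ := ψ.le_opNorm _
    _ ≤ _ := by gcongr

theorem Ctx.mNorm_eq (c : Ctx B B' m) {f : Ω → ℝ} (hf : MIntegrable m f) :
    mNorm m f = ‖II m (fun ω => |f ω|)‖ := by
  have hb : ∀ x : {x : X →L[ℝ] ℝ // ‖x‖ ≤ 1},
      ∫ ω, |f ω| ∂(dualApply m x.1).totalVariation ≤ ‖II m (fun ω => |f ω|)‖ := fun x =>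
    (c.integral_tv_le hf x.1).trans (mul_le_of_le_one_left (norm_nonneg _) x.2)
  apply le_antisymm
  · haveI : Nonempty {x : X →L[ℝ] ℝ // ‖x‖ ≤ 1} := ⟨⟨0, by simp⟩⟩
    exact ciSup_le hb
  · obtain ⟨φ, hφ, hφ2⟩ := exists_dual_vector'' ℝ (II m (fun ω => |f ω|))
    obtain ⟨ψ, h0, hn, h1, h2⟩ := exists_absF B' φ
    have h3 := c.apply_nonneg h1 (c.II_nonneg hf.abs fun _ => abs_nonneg _)
    have h4 : ‖II m (fun ω => |f ω|)‖ ≤ ψ (II m (fun ω => |f ω|)) := by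
      simp only [ContinuousLinearMap.sub_apply, hφ2] at h3
      have h5 : (RCLike.ofReal ‖II m (fun ω => |f ω|)‖ : ℝ) = ‖II m (fun ω => |f ω|)‖ := rfl
      linarith
    rw [c.II_apply h0 hf.abs] at h4
    refine h4.trans ?_
    exact le_ciSup (f := fun x : {x : X →L[ℝ] ℝ // ‖x‖ ≤ 1} =>
      ∫ ω, |f ω| ∂(dualApply m x.1).totalVariation)
      ⟨_, by rintro _ ⟨x, rfl⟩; exact hb x⟩ ⟨ψ, hn.trans hφ⟩

theorem Ctx.norm_II_mono (c : Ctx B B' m) {f g : Ω → ℝ} (hf : MIntegrable m f)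
    (hg : MIntegrable m g) (h0 : ∀ ω, 0 ≤ f ω) (h : ∀ ω, f ω ≤ g ω) : ‖II m f‖ ≤ ‖II m g‖ := by
  apply B.norm_le
  filter_upwards [c.II_nonneg hf h0, c.II_mono hf hg h] with s h1 h2
  rw [abs_of_nonneg h1]
  exact h2.trans (le_abs_self _)

theorem Ctx.mNorm_mono (c : Ctx B B' m) {f g : Ω → ℝ} (hf : MIntegrable m f)
    (hg : MIntegrable m g) (h : ∀ ω, |f ω| ≤ |g ω|) : mNorm m f ≤ mNorm m g := by
  rw [c.mNorm_eq hf, c.mNorm_eq hg]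
  exact c.norm_II_mono hf.abs hg.abs (fun _ => abs_nonneg _) h

theorem mNorm_nonneg (f : Ω → ℝ) : 0 ≤ mNorm m f :=
  Real.iSup_nonneg fun _ => integral_nonneg fun _ => abs_nonneg _

theorem Ctx.mNorm_add_le (c : Ctx B B' m) {f g : Ω → ℝ} (hf : MIntegrable m f)
    (hg : MIntegrable m g) : mNorm m (f + g) ≤ mNorm m f + mNorm m g := by
  rw [c.mNorm_eq hf, c.mNorm_eq hg, c.mNorm_eq (hf.add hg)]
  refine le_trans ?_ (norm_add_le _ _)
  rw [← II_add hf.abs hg.abs]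
  exact c.norm_II_mono (hf.add hg).abs (hf.abs.add hg.abs) (fun _ => abs_nonneg _)
    fun ω => abs_add_le _ _

theorem Ctx.mNorm_smul (c : Ctx B B' m) {f : Ω → ℝ} (r : ℝ) (hf : MIntegrable m f) :
    mNorm m (r • f) = |r| * mNorm m f := by
  rw [c.mNorm_eq hf, c.mNorm_eq (hf.smul r)]
  have : (fun ω => |(r • f) ω|) = |r| • fun ω => |f ω| := by
    ext ω; simp [abs_mul]
  rw [this, II_smul _ hf.abs, norm_smul, Real.norm_eq_abs, abs_abs]

theorem Ctx.norm_II_le (c : Ctx B B' m) {f : Ω → ℝ} (hf : MIntegrable m f) :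
    ‖II m f‖ ≤ mNorm m f := by
  rw [c.mNorm_eq hf]
  apply B.norm_le
  filter_upwards [c.II_mono hf hf.abs fun ω => le_abs_self _,
    c.II_mono (hf.smul (-1)) hf.abs fun ω => by simpa using neg_le_abs (f ω)] with s h1 h2
  rw [II_smul _ hf, map_smul, Pi.smul_apply, smul_eq_mul] at h2
  refine le_trans ?_ (le_abs_self _)
  exact abs_le'.2 ⟨h1, by linarith⟩

theorem Ctx.mNorm_sum_le (c : Ctx B B' m) {ι : Type*} {f : ι → Ω → ℝ} (s : Finset ι)
    (hf : ∀ i, MIntegrable m (f i)) : mNorm m (∑ i ∈ s, f i) ≤ ∑ i ∈ s, mNorm m (f i) := by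
  classical
  induction s using Finset.induction_on with
  | empty =>
    have := c.mNorm_smul (m := m) 0 MIntegrable.zero
    simp only [zero_smul, abs_zero, zero_mul] at this
    simp [this]
  | insert a s ha ih =>
    rw [Finset.sum_insert ha, Finset.sum_insert ha]
    refine (c.mNorm_add_le (hf a) (MIntegrable.sum _ fun i _ => hf i)).trans ?_
    linarith

end L1m

section SSP
variable {S : Type*} [MeasurableSpace S] {μ : Measure S}
variable {X : Type*} [NormedAddCommGroup X] [NormedSpace ℝ X]
variable {Ω : Type*} [MeasurableSpace Ω]
variable {B : BFS S μ X} {B' : BFS S μ (X →L[ℝ] ℝ)} {m : VectorMeasure Ω X}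

theorem tail_union {η : Measure Ω} {E : ℕ → Set Ω} (h : ∑' i, η (E i) ≠ ∞) :
    Tendsto (fun r => η (⋃ i, E (i + r))) atTop (𝓝 0) :=
  tendsto_of_tendsto_of_tendsto_of_le_of_le tendsto_const_nhds (ENNReal.tendsto_sum_nat_add _ h)
    (fun _ => zero_le) (fun _ => measure_iUnion_le _)

theorem exists_min (d : ℕ → ℝ) (hd : ∀ i, 0 < d i) (J : ℕ) : ∃ δ > 0, ∀ i < J, δ ≤ d i := by
  induction J with
  | zero => exact ⟨1, one_pos, fun i hi => absurd hi (Nat.not_lt_zero _)⟩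
  | succ J ih =>
    obtain ⟨δ, h, h2⟩ := ih
    refine ⟨min δ (d J), lt_min h (hd J), fun i hi => ?_⟩
    rcases Nat.lt_succ_iff_lt_or_eq.1 hi with h3 | rfl
    · exact (min_le_left _ _).trans (h2 i h3)
    · exact min_le_right _ _

theorem eq_zero_of_semivar {A : Set Ω} (h : semivar m A = 0) : m A = 0 := by
  rw [SeparatingDual.eq_zero_iff_forall_dual_eq_zero (R := ℝ)]
  obtain ⟨φ, h1, h2⟩ := exists_dual_vector'' ℝ (m A)
  have h3 : (dualApply m φ).totalVariation A = 0 := by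
    have := le_iSup (fun x : {x : X →L[ℝ] ℝ // ‖x‖ ≤ 1} => (dualApply m x.1).totalVariation A)
      ⟨φ, h1⟩
    rw [semivar] at h
    rw [h] at this
    simpa using this
  have h4 := SignedMeasure.null_of_totalVariation_zero _ h3
  rw [dualApply_apply, h2] at h4
  have h5 : ‖m A‖ = 0 := h4
  intro g
  rw [norm_eq_zero.1 h5, map_zero]

theorem Ctx.ac (c : Ctx B B' m) (hWBS : WeakBanachSaks X) {x₀ : X →L[ℝ] ℝ}
    (hRyb : ∀ A : Set Ω, MeasurableSet A →
      ((dualApply m x₀).totalVariation A = 0 ↔ semivar m A = 0))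
    {f : Ω → ℝ} (hf : MIntegrable m f) {ε : ℝ} (hε : 0 < ε) :
    ∃ δ : ℝ, 0 < δ ∧ ∀ A : Set Ω, MeasurableSet A →
      (dualApply m x₀).totalVariation A < ENNReal.ofReal δ → mNorm m (A.indicator f) ≤ ε := by
  by_contra hcon
  push Not at hcon
  set η := (dualApply m x₀).totalVariation with hη
  choose A hA hAη hAf using fun n : ℕ => hcon ((1 / 2 : ℝ) ^ n) (by positivity)
  have hsum : ∑' i, η (A i) ≠ ∞ := by
    refine ne_top_of_le_ne_top ?_ (ENNReal.tsum_le_tsum fun i => (hAη i).le)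
    rw [← ENNReal.ofReal_tsum_of_nonneg (fun n => by positivity) summable_geometric_two]
    exact ENNReal.ofReal_ne_top
  let C : ℕ → Set Ω := fun n => ⋃ i, A (i + n)
  have hC : ∀ n, MeasurableSet (C n) := fun n => MeasurableSet.iUnion fun i => hA _
  have hCanti : Antitone C := by
    intro a b hab ω hω
    obtain ⟨i, hi⟩ := Set.mem_iUnion.1 hω
    refine Set.mem_iUnion.2 ⟨i + b - a, ?_⟩
    have : i + b - a + a = i + b := by omega
    rwa [this]
  have hN : η (⋂ n, C n) = 0 := by
    refine le_antisymm ?_ (zero_le)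
    exact ge_of_tendsto' (tail_union hsum) fun n => measure_mono (Set.iInter_subset _ n)
  have hNm : MeasurableSet (⋂ n, C n) := MeasurableSet.iInter hC
  have hmN : m (⋂ n, C n) = 0 := eq_zero_of_semivar ((hRyb _ hNm).1 hN)
  have hfC : ∀ n, MIntegrable m ((C n).indicator fun ω => |f ω|) := fun n =>
    hf.abs.indicator (hC n)
  let v : ℕ → X := fun n => II m ((C n).indicator fun ω => |f ω|)
  have hv0 : ∀ n, ∀ᵐ s ∂μ, 0 ≤ B.J (v n) s := fun n =>
    c.II_nonneg (hfC n) fun ω => Set.indicator_nonneg (fun _ _ => abs_nonneg _) _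
  have hw : ∀ φ : X →L[ℝ] ℝ, Tendsto (fun n => φ (v n)) atTop (𝓝 0) := by
    intro φ
    obtain ⟨ψ, h0, -, h1, h2⟩ := exists_absF B' φ
    have h3 : Tendsto (fun n => ψ (v n)) atTop (𝓝 0) := by
      have h4 : ∀ n, ψ (v n) = ∫ ω in C n, |f ω| ∂(dualApply m ψ).totalVariation := fun n => by
        rw [c.II_apply h0 (hfC n), integral_indicator (hC n)]
      simp only [h4]
      have h5 := tendsto_setIntegral_of_antitone (μ := (dualApply m ψ).totalVariation)
        (f := fun ω => |f ω|) hC hCanti ⟨0, (hf.2.1 ψ).abs.integrableOn⟩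
      have h6 : (dualApply m ψ).totalVariation (⋂ n, C n) = 0 := by
        have := c.tv_real h0 hNm
        rw [hmN, map_zero] at this
        simpa [measureReal_def, ENNReal.toReal_eq_zero_iff] using this
      rwa [setIntegral_measure_zero _ h6] at h5
    apply squeeze_zero_norm _ h3
    intro n
    have h7 := c.apply_nonneg h1 (hv0 n)
    have h8 := c.apply_nonneg h2 (hv0 n)
    simp only [sub_apply, add_apply] at h7 h8
    rw [Real.norm_eq_abs]
    exact abs_le'.2 ⟨by linarith, by linarith⟩
  obtain ⟨σ, hσ, hlim⟩ := hWBS v hw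
  have hbig : ∀ n : ℕ, 1 ≤ n → ε ≤ ‖(n : ℝ)⁻¹ • ∑ k ∈ Finset.range n, v (σ k)‖ := by
    intro n hn
    have hn' : (0 : ℝ) < n := by exact_mod_cast hn
    have e1 : (n : ℝ)⁻¹ • ∑ k ∈ Finset.range n, v (σ k) =
        II m ((n : ℝ)⁻¹ • ∑ k ∈ Finset.range n, (C (σ k)).indicator fun ω => |f ω|) := by
      rw [II_smul _ (MIntegrable.sum _ fun k _ => hfC (σ k)), II_sum _ fun k _ => hfC (σ k)]
    rw [e1]
    calc ε ≤ mNorm m ((A (σ n)).indicator f) := (hAf (σ n)).le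
      _ = ‖II m (fun ω => |(A (σ n)).indicator f ω|)‖ := c.mNorm_eq (hf.indicator (hA _))
      _ ≤ _ := by
        apply c.norm_II_mono (hf.indicator (hA _)).abs
          ((MIntegrable.sum _ fun k _ => hfC (σ k)).smul _) (fun _ => abs_nonneg _)
        intro ω
        by_cases hω : ω ∈ A (σ n)
        · have : ∀ k ∈ Finset.range n, (C (σ k)).indicator (fun ω => |f ω|) ω = |f ω| := by
            intro k hk
            apply Set.indicator_of_mem
            apply hCanti (hσ.monotone (Finset.mem_range.1 hk).le)
            exact Set.mem_iUnion.2 ⟨0, by simpa using hω⟩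
          simp only [Pi.smul_apply, Finset.sum_apply, smul_eq_mul]
          rw [Set.indicator_of_mem hω, Finset.sum_congr rfl this, Finset.sum_const,
            Finset.card_range, nsmul_eq_mul, inv_mul_cancel_left₀ hn'.ne']
        · rw [Set.indicator_of_notMem hω, abs_zero]
          simp only [Pi.smul_apply, Finset.sum_apply, smul_eq_mul]
          refine mul_nonneg (by positivity) (Finset.sum_nonneg fun k _ => ?_)
          exact Set.indicator_nonneg (fun _ _ => abs_nonneg _) _
  have : ε ≤ 0 := ge_of_tendsto hlim (by
    filter_upwards [eventually_ge_atTop 1] with n hn using hbig n hn)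
  linarith

/-- slice of `|f|` -/
def slice (f : Ω → ℝ) (s t : ℝ) : Ω → ℝ :=
  {ω | s < |f ω| ∧ |f ω| ≤ t}.indicator fun ω => |f ω|

theorem slice_meas {f : Ω → ℝ} (hf : MIntegrable m f) (s t : ℝ) :
    MeasurableSet {ω | s < |f ω| ∧ |f ω| ≤ t} :=
  (measurableSet_lt measurable_const hf.1.abs).inter (measurableSet_le hf.1.abs measurable_const)

theorem slice_int {f : Ω → ℝ} (hf : MIntegrable m f) (s t : ℝ) : MIntegrable m (slice f s t) :=
  hf.abs.indicator (slice_meas hf s t)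

theorem slice_nonneg (f : Ω → ℝ) (s t : ℝ) (ω : Ω) : 0 ≤ slice f s t ω :=
  Set.indicator_nonneg (fun _ _ => abs_nonneg _) _

theorem slice_le (f : Ω → ℝ) {s t : ℝ} (ht : 0 ≤ t) (ω : Ω) : slice f s t ω ≤ t := by
  by_cases h : ω ∈ {ω | s < |f ω| ∧ |f ω| ≤ t}
  · rw [slice, Set.indicator_of_mem h]; exact h.2
  · rw [slice, Set.indicator_of_notMem h]; exact ht

theorem slice_sum (f : Ω → ℝ) {s : ℕ → ℕ} (hs : StrictMono s) (ω : Ω) (K : ℕ) :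
    ∑ k ∈ Finset.range K, slice f (s k) (s (k + 1)) ω ≤ slice f (s 0) (s K) ω := by
  induction K with
  | zero => simpa using slice_nonneg f _ _ ω
  | succ K ih =>
    rw [Finset.sum_range_succ]
    refine (add_le_add_left ih _).trans ?_
    have h1 : (s K : ℝ) < s (K + 1) := by exact_mod_cast hs (Nat.lt_succ_self K)
    have h2 : (s 0 : ℝ) ≤ s K := by exact_mod_cast hs.monotone (Nat.zero_le K)
    simp only [slice, Set.indicator_apply, Set.mem_setOf_eq]
    have h3 := abs_nonneg (f ω)
    split_ifs <;> grind

theorem Ctx.slices [CompleteSpace X] [IsFiniteMeasure μ] (c : Ctx B B' m)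
    (hrange : B.UnifAC {x : X | ∃ A : Set Ω, MeasurableSet A ∧ m A = x})
    {f : ℕ → Ω → ℝ} (hf : ∀ n, MIntegrable m (f n)) {C : ℝ} (hC : ∀ n, mNorm m (f n) ≤ C)
    {G H : ℕ → X} (hFGH : ∀ n, II m (fun ω => |f n ω|) = G n + H n)
    (hG : B.UnifAC (Set.range G))
    (hH : ∀ i j, i ≠ j → (fun s => B.J (H i) s * B.J (H j) s) =ᵐ[μ] 0)
    (hGH : ∀ n, (fun s => B.J (G n) s * B.J (H n) s) =ᵐ[μ] 0)
    {ε : ℝ} (hε : 0 < ε) :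
    ∃ s : ℕ, ∀ t : ℕ, ∀ᶠ n in (hyperfilter ℕ : Filter ℕ), ‖II m (slice (f n) s t)‖ ≤ ε := by
  by_contra hcon
  push Not at hcon
  choose T hT using hcon
  have hT1 : ∀ s : ℕ, ∀ᶠ n in (hyperfilter ℕ : Filter ℕ), ε < ‖II m (slice (f n) s (T s))‖ := by
    intro s
    exact hT s
  have hTs : ∀ s : ℕ, s < T s := by
    intro s
    by_contra h
    obtain ⟨n, hn⟩ := (hT1 s).exists
    have h2 : slice (f n) s (T s) = 0 := by
      have h3 : (T s : ℝ) ≤ s := by exact_mod_cast not_lt.1 h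
      ext ω
      rw [slice, Set.indicator_of_notMem]
      · rfl
      · rintro ⟨h4, h5⟩
        linarith
    rw [h2, II_zero, norm_zero] at hn
    linarith
  let s : ℕ → ℕ := fun k => T^[k] 0
  have hsucc : ∀ k, s (k + 1) = T (s k) := fun k => Function.iterate_succ_apply' T k 0
  have hs : StrictMono s := strictMono_nat_of_lt_succ fun k => by rw [hsucc]; exact hTs _
  obtain ⟨K, hK⟩ := B.core (e := m Set.univ) (c.pos _ MeasurableSet.univ)
    (fun ε hε => by
      obtain ⟨δ, h1, h2⟩ := hrange ε hε
      exact ⟨δ, h1, fun A hA hAδ x hx => h2 A hA hAδ x ⟨Set.univ, MeasurableSet.univ, hx.symm⟩⟩)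
    (F := fun n => II m (fun ω => |f n ω|)) (G := G) (H := H) (C := C)
    (fun n => by rw [← c.mNorm_eq (hf n)]; exact hC n) hFGH hGH hG hH
    (u := fun n k => II m (slice (f n) (s k) (s (k + 1)))) (c := fun k => (s (k + 1) : ℝ))
    (fun n k => c.II_nonneg (slice_int (hf n) _ _) (slice_nonneg _ _ _))
    (fun n k => by
      have := c.II_mono (slice_int (hf n) (s k) (s (k + 1))) (MIntegrable.const (s (k + 1) : ℝ))
        (slice_le _ (by positivity))
      rw [II_const] at this
      filter_upwards [this] with ω hω
      simpa using hω)
    (fun n K => by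
      have := c.II_mono (MIntegrable.sum (Finset.range K)
        fun k _ => slice_int (hf n) (s k) (s (k + 1))) (hf n).abs (fun ω => by
          rw [Finset.sum_apply]
          refine (slice_sum (f n) hs ω K).trans ?_
          exact Set.indicator_le_self' (fun _ _ => abs_nonneg _) ω)
      rw [II_sum _ fun k _ => slice_int (hf n) (s k) (s (k + 1))] at this
      filter_upwards [this] with ω hω
      simpa using hω) hε
  have h1 : ∀ᶠ n in (hyperfilter ℕ : Filter ℕ), ∀ k ∈ Finset.range K,
      ε < ‖II m (slice (f n) (s k) (s (k + 1)))‖ := by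
    rw [Filter.eventually_all_finset]
    intro k _
    rw [hsucc]
    exact hT1 _
  have h2 : ∀ᶠ n in (hyperfilter ℕ : Filter ℕ), ∃ k < K,
      ‖II m (slice (f n) (s k) (s (k + 1)))‖ ≤ ε := Nat.hyperfilter_le_atTop hK
  obtain ⟨n, h3, k, h4, h5⟩ := (h1.and h2).exists
  exact absurd (h3 k (Finset.mem_range.2 h4)) (not_lt.2 h5)

theorem Ctx.ssp [CompleteSpace X] [IsFiniteMeasure μ] (c : Ctx B B' m) (hWBS : WeakBanachSaks X)
    (hX : B.SSP)
    (hrange : B.UnifAC {x : X | ∃ A : Set Ω, MeasurableSet A ∧ m A = x})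
    {x₀ : X →L[ℝ] ℝ}
    (hRyb : ∀ A : Set Ω, MeasurableSet A →
      ((dualApply m x₀).totalVariation A = 0 ↔ semivar m A = 0))
    {f : ℕ → Ω → ℝ} (hf : ∀ n, MIntegrable m (f n)) {C : ℝ} (hC : ∀ n, mNorm m (f n) ≤ C) :
    ∃ σ : ℕ → ℕ, StrictMono σ ∧ ∃ D : ℕ → Set Ω, (∀ n, MeasurableSet (D n)) ∧
      (∀ i j, i ≠ j → Disjoint (D i) (D j)) ∧
      UnifACNorm (dualApply m x₀).totalVariation (mNorm m)
        (Set.range fun n => (D n)ᶜ.indicator (f (σ n))) := by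
  obtain ⟨σ0, hσ0, G, H, hFGH, hGH, hG, hH⟩ := hX (fun n => II m (fun ω => |f n ω|))
    ⟨C, fun n => by rw [← c.mNorm_eq (hf n)]; exact hC n⟩
  have hsl := fun j : ℕ => c.slices hrange (f := fun n => f (σ0 n)) (fun n => hf _) (fun n => hC _)
    hFGH hG hH hGH (ε := (1 / 2 : ℝ) ^ j) (by positivity)
  choose s hs using hsl
  obtain ⟨σ1, hσ1, hσ1'⟩ : ∃ σ1 : ℕ → ℕ, StrictMono σ1 ∧ ∀ i, ∀ j ∈ Finset.range (i + 1),
      ‖II m (slice (f (σ0 (σ1 i))) (s j) ((2 ^ i : ℕ) : ℝ))‖ ≤ (1 / 2 : ℝ) ^ j := by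
    apply extraction_forall_of_frequently (P := fun i n => ∀ j ∈ Finset.range (i + 1),
      ‖II m (slice (f (σ0 n)) (s j) ((2 ^ i : ℕ) : ℝ))‖ ≤ (1 / 2 : ℝ) ^ j)
    intro i
    have h1 : ∀ᶠ n in (hyperfilter ℕ : Filter ℕ), ∀ j ∈ Finset.range (i + 1),
        ‖II m (slice (f (σ0 n)) (s j) ((2 ^ i : ℕ) : ℝ))‖ ≤ (1 / 2 : ℝ) ^ j := by
      rw [Filter.eventually_all_finset]
      intro j _
      exact hs j _
    exact h1.frequently.filter_mono Nat.hyperfilter_le_atTop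
  set η := (dualApply m x₀).totalVariation with hη
  let F : ℕ → Ω → ℝ := fun i => f (σ0 (σ1 i))
  have hF : ∀ i, MIntegrable m (F i) := fun i => hf _
  let E : ℕ → Set Ω := fun i => {ω | (2 : ℝ) ^ i < |F i ω|}
  have hE : ∀ i, MeasurableSet (E i) := fun i => measurableSet_lt measurable_const (hF i).1.abs
  have hEη : ∀ i, η (E i) ≤ ENNReal.ofReal (‖x₀‖ * C * (1 / 2 : ℝ) ^ i) := by
    intro i
    have h1 := mul_meas_ge_le_integral_of_nonneg (μ := η) (f := fun ω => |F i ω|)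
      (Eventually.of_forall fun _ => abs_nonneg _) ((hF i).2.1 x₀).abs ((2 : ℝ) ^ i)
    have h2 := c.integral_tv_le (hF i) x₀
    rw [← c.mNorm_eq (hF i)] at h2
    have h3 : ‖x₀‖ * mNorm m (F i) ≤ ‖x₀‖ * C := by
      have := hC (σ0 (σ1 i))
      gcongr
    have h4 : η.real (E i) ≤ η.real {ω | (2 : ℝ) ^ i ≤ |F i ω|} :=
      measureReal_mono (fun ω hω => by
        change (2 : ℝ) ^ i < |F i ω| at hω
        change (2 : ℝ) ^ i ≤ |F i ω|
        exact hω.le)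
    have h5 : (2 : ℝ) ^ i * η.real (E i) ≤ ‖x₀‖ * C := by
      refine le_trans ?_ (h1.trans (h2.trans h3))
      gcongr
    have h6 : η.real (E i) ≤ ‖x₀‖ * C * (1 / 2 : ℝ) ^ i := by
      rw [one_div, inv_pow, ← div_eq_mul_inv, le_div_iff₀ (by positivity)]
      linarith
    exact (ENNReal.le_ofReal_iff_toReal_le (measure_ne_top _ _)
      (measureReal_nonneg.trans h6)).2 h6
  have hsum : ∑' i, η (E i) ≠ ∞ := by
    have hC0 : 0 ≤ C := (mNorm_nonneg _).trans (hC 0)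
    refine ne_top_of_le_ne_top ?_ (ENNReal.tsum_le_tsum hEη)
    rw [← ENNReal.ofReal_tsum_of_nonneg (fun n => by positivity)
      (summable_geometric_two.mul_left _)]
    exact ENNReal.ofReal_ne_top
  let U : ℕ → Set Ω := fun r => ⋃ i, E (i + r)
  have hU : ∀ r, MeasurableSet (U r) := fun r => MeasurableSet.iUnion fun i => hE _
  have hEU : ∀ {r j}, r ≤ j → E j ⊆ U r := by
    intro r j hrj
    have : E j = E ((j - r) + r) := by congr 1; omega
    rw [this]
    exact Set.subset_iUnion (fun i => E (i + r)) (j - r)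
  choose d hd hd' using fun i => c.ac hWBS hRyb (hF i) (ε := (1 / 2 : ℝ) ^ i) (by positivity)
  have hR : ∀ i, ∃ R, ∀ r ≥ R, η (U r) < ENNReal.ofReal (d i) := fun i =>
    eventually_atTop.1 ((tail_union hsum).eventually (gt_mem_nhds (ENNReal.ofReal_pos.2 (hd i))))
  choose R hR using hR
  let τ : ℕ → ℕ := fun n => Nat.rec 0 (fun _ p => max (p + 1) (R p)) n
  have hτs : ∀ i, τ (i + 1) = max (τ i + 1) (R (τ i)) := fun i => rfl
  have hτ : StrictMono τ := strictMono_nat_of_lt_succ fun k => by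
    rw [hτs]; exact lt_of_lt_of_le (Nat.lt_succ_self _) (le_max_left _ _)
  have hτU : ∀ i, mNorm m ((U (τ (i + 1))).indicator (F (τ i))) ≤ (1 / 2 : ℝ) ^ (τ i) := fun i =>
    hd' (τ i) _ (hU _) (hR _ _ (by rw [hτs]; exact le_max_right _ _))
  let D : ℕ → Set Ω := fun i => E (τ i) \ U (τ (i + 1))
  have hD : ∀ i, MeasurableSet (D i) := fun i => (hE _).diff (hU _)
  refine ⟨fun i => σ0 (σ1 (τ i)), hσ0.comp (hσ1.comp hτ), D, hD, ?_, ?_⟩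
  · have key : ∀ i j, i < j → Disjoint (D i) (D j) := by
      intro i j hij
      rw [Set.disjoint_left]
      rintro ω ⟨_, h1⟩ ⟨h2, _⟩
      exact h1 (hEU (hτ.monotone hij) h2)
    intro i j hij
    rcases lt_or_gt_of_ne hij with h | h
    · exact key i j h
    · exact (key j i h).symm
  · intro ε hε
    obtain ⟨J, hJ⟩ := exists_pow_lt_of_lt_one (show (0 : ℝ) < ε / 3 by positivity)
      (show (1 / 2 : ℝ) < 1 by norm_num)
    obtain ⟨δ1, hδ1, hδ1'⟩ := c.ac hWBS hRyb (MIntegrable.const (s J : ℝ)) (ε := ε / 3)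
      (by positivity)
    choose d2 hd2 hd2' using fun i => c.ac hWBS hRyb (hF (τ i)) hε
    obtain ⟨δ2, hδ2, hδ2'⟩ := exists_min d2 hd2 J
    refine ⟨min δ1 δ2, lt_min hδ1 hδ2, ?_⟩
    rintro A hA hAδ _ ⟨i, rfl⟩
    change mNorm m (A.indicator ((D i)ᶜ.indicator (F (τ i)))) ≤ ε
    have hint : MIntegrable m (A.indicator ((D i)ᶜ.indicator (F (τ i)))) :=
      ((hF _).indicator (hD i).compl).indicator hA
    rcases lt_or_ge i J with hi | hi
    · refine le_trans (c.mNorm_mono hint ((hF (τ i)).indicator hA) fun ω => ?_)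
        (hd2' i A hA (lt_of_lt_of_le hAδ (ENNReal.ofReal_le_ofReal
          ((min_le_right _ _).trans (hδ2' i hi)))))
      by_cases h1 : ω ∈ A <;> by_cases h2 : ω ∈ D i <;> simp [h1, h2]
    · have b1 := hδ1' A hA (lt_of_lt_of_le hAδ (ENNReal.ofReal_le_ofReal (min_le_left _ _)))
      have hiτ : i ≤ τ i := hτ.id_le i
      have b2 : mNorm m (slice (F (τ i)) (s J) ((2 ^ (τ i) : ℕ) : ℝ)) ≤ (1 / 2 : ℝ) ^ J := by
        rw [c.mNorm_eq (slice_int (hF _) _ _)]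
        have : (fun ω => |slice (F (τ i)) (s J) ((2 ^ (τ i) : ℕ) : ℝ) ω|) =
            slice (F (τ i)) (s J) ((2 ^ (τ i) : ℕ) : ℝ) := by
          ext ω; exact abs_of_nonneg (slice_nonneg _ _ _ _)
        rw [this]
        exact hσ1' (τ i) J (Finset.mem_range.2 (by omega))
      have b3 : mNorm m ((U (τ (i + 1))).indicator (F (τ i))) ≤ (1 / 2 : ℝ) ^ J :=
        (hτU i).trans (pow_le_pow_of_le_one (by norm_num) (by norm_num) (by omega))
      have i1 : MIntegrable m (A.indicator fun _ => (s J : ℝ)) := (MIntegrable.const _).indicator hA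
      have i2 := slice_int (hF (τ i)) (s J) ((2 ^ (τ i) : ℕ) : ℝ)
      have i3 : MIntegrable m (fun ω => |(U (τ (i + 1))).indicator (F (τ i)) ω|) :=
        ((hF _).indicator (hU _)).abs
      have b4 : mNorm m (fun ω => |(U (τ (i + 1))).indicator (F (τ i)) ω|) ≤ (1 / 2 : ℝ) ^ J :=
        le_trans (c.mNorm_mono i3 ((hF _).indicator (hU _)) fun ω => by rw [abs_abs]) b3
      have b5 := c.mNorm_add_le (i1.add i2) i3
      have b6 := c.mNorm_add_le i1 i2
      refine le_trans (c.mNorm_mono hint ((i1.add i2).add i3) fun ω => ?_)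
        (b5.trans (by linarith))
      refine le_trans ?_ (le_abs_self _)
      simp only [Pi.add_apply]
      have n1 : 0 ≤ (A.indicator fun _ => (s J : ℝ)) ω :=
        Set.indicator_nonneg (fun _ _ => by positivity) _
      have n2 := slice_nonneg (F (τ i)) (s J) ((2 ^ (τ i) : ℕ) : ℝ) ω
      have n3 := abs_nonneg ((U (τ (i + 1))).indicator (F (τ i)) ω)
      by_cases h1 : ω ∈ A
      swap
      · rw [Set.indicator_of_notMem h1, abs_zero]; positivity
      rw [Set.indicator_of_mem h1]
      by_cases h2 : ω ∈ D i
      · rw [Set.indicator_of_notMem (by simpa using h2), abs_zero]; positivity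
      rw [Set.indicator_of_mem (by simpa using h2)]
      by_cases h3 : ω ∈ U (τ (i + 1))
      · rw [Set.indicator_of_mem h3] at *
        linarith
      have h4 : |F (τ i) ω| ≤ (2 : ℝ) ^ (τ i) := by
        by_contra h
        exact h2 ⟨not_le.1 h, h3⟩
      by_cases h5 : (s J : ℝ) < |F (τ i) ω|
      · have : slice (F (τ i)) (s J) ((2 ^ (τ i) : ℕ) : ℝ) ω = |F (τ i) ω| := by
          rw [slice, Set.indicator_of_mem]
          exact ⟨h5, by push_cast; exact h4⟩
        linarith
      · rw [Set.indicator_of_mem h1] at *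
        linarith [not_lt.1 h5]

end SSP

section Hilbert
variable {H : Type*} [NormedAddCommGroup H] [InnerProductSpace ℝ H]

theorem hilb_cesaro {b : ℕ → H} {C : ℝ} (hb : ∀ n, ‖b n‖ ≤ C) {w : ℕ → ℝ} (hw0 : ∀ n, 0 ≤ w n)
    (hw : Tendsto w atTop (𝓝 0)) (h : ∀ i j, i < j → |inner ℝ (b i) (b j)| ≤ w i) :
    Tendsto (fun n : ℕ => (n : ℝ)⁻¹ • ∑ k ∈ Finset.range n, b k) atTop (𝓝 0) := by
  have h1 : ∀ n : ℕ, ‖∑ k ∈ Finset.range n, b k‖ ^ 2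
      ≤ n * C ^ 2 + 2 * n * ∑ i ∈ Finset.range n, w i := by
    intro n
    induction n with
    | zero => simp
    | succ n ih =>
      rw [Finset.sum_range_succ, Finset.sum_range_succ, norm_add_sq_real]
      have h2 : inner ℝ (∑ k ∈ Finset.range n, b k) (b n) ≤ ∑ i ∈ Finset.range n, w i := by
        rw [sum_inner]
        exact Finset.sum_le_sum fun i hi => (le_abs_self _).trans (h i n (Finset.mem_range.1 hi))
      have h3 : ‖b n‖ ^ 2 ≤ C ^ 2 := by
        have := hb n
        gcongr
      have h4 := hw0 n
      have h5 : 0 ≤ ∑ i ∈ Finset.range n, w i := Finset.sum_nonneg fun i _ => hw0 i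
      push_cast
      have h6 : 0 ≤ (n : ℝ) * w n := by positivity
      nlinarith
  have h2 : Tendsto (fun n : ℕ => C ^ 2 * (n : ℝ)⁻¹ + 2 * ((n : ℝ)⁻¹ * ∑ i ∈ Finset.range n, w i))
      atTop (𝓝 0) := by
    have := (tendsto_inv_atTop_nhds_zero_nat (𝕜 := ℝ)).const_mul (C ^ 2)
    have h3 := hw.cesaro.const_mul 2
    simpa using this.add h3
  have h3 : Tendsto (fun n : ℕ => ‖(n : ℝ)⁻¹ • ∑ k ∈ Finset.range n, b k‖ ^ 2) atTop (𝓝 0) := by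
    refine squeeze_zero (fun n => by positivity) (fun n => ?_) h2
    rcases Nat.eq_zero_or_pos n with rfl | hn
    · simp
    rw [norm_smul, mul_pow, norm_inv, Real.norm_natCast]
    have hn' : (0 : ℝ) < n := by exact_mod_cast hn
    calc ((n : ℝ)⁻¹) ^ 2 * ‖∑ k ∈ Finset.range n, b k‖ ^ 2
        ≤ ((n : ℝ)⁻¹) ^ 2 * (n * C ^ 2 + 2 * n * ∑ i ∈ Finset.range n, w i) := by
          gcongr; exact h1 n
      _ = _ := by field_simp
  rw [tendsto_zero_iff_norm_tendsto_zero]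
  have h4 := h3.sqrt
  simpa using h4

theorem hilb_lim [CompleteSpace H] {a : ℕ → H} {C : ℝ} (ha : ∀ n, ‖a n‖ ≤ C) :
    ∃ v : H, ∀ x : H, Tendsto (fun n => inner ℝ (a n) x) (hyperfilter ℕ : Filter ℕ)
      (𝓝 (inner ℝ v x)) := by
  let A : ℕ → WeakDual ℝ H := fun n => StrongDual.toWeakDual (InnerProductSpace.toDual ℝ H (a n))
  have hc := WeakDual.isCompact_closedBall (𝕜 := ℝ) (E := H) (0 : StrongDual ℝ H) C
  obtain ⟨φ, -, hφ⟩ := hc.ultrafilter_le_nhds ((hyperfilter ℕ).map A) (by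
    rw [le_principal_iff]
    refine Filter.mem_map.2 (Filter.univ_mem' fun n => ?_)
    simpa [A] using ha n)
  refine ⟨(InnerProductSpace.toDual ℝ H).symm (WeakDual.toStrongDual φ), fun x => ?_⟩
  have h1 : Tendsto A (hyperfilter ℕ : Filter ℕ) (𝓝 φ) := hφ
  have h2 := ((WeakDual.eval_continuous x).tendsto φ).comp h1
  rw [InnerProductSpace.toDual_symm_apply]
  exact h2

theorem hilb [CompleteSpace H] {a : ℕ → ℕ → H} {C : ℕ → ℝ} (ha : ∀ t n, ‖a t n‖ ≤ C t) :
    ∃ v : ℕ → H, (∀ t x, Tendsto (fun n => inner ℝ (a t n) x) (hyperfilter ℕ : Filter ℕ)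
      (𝓝 (inner ℝ (v t) x))) ∧ ∃ σ : ℕ → ℕ, StrictMono σ ∧ ∀ τ : ℕ → ℕ, StrictMono τ → ∀ t,
      Tendsto (fun n : ℕ => (n : ℝ)⁻¹ • ∑ k ∈ Finset.range n, a t (σ (τ k))) atTop (𝓝 (v t)) := by
  choose v hv using fun t => hilb_lim (ha t)
  refine ⟨v, hv, ?_⟩
  let b : ℕ → ℕ → H := fun t n => a t n - v t
  have hb : ∀ t n, ‖b t n‖ ≤ C t + ‖v t‖ := fun t n =>
    (norm_sub_le _ _).trans (by gcongr; exact ha t n)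
  have hlim : ∀ t x, Tendsto (fun n => inner ℝ x (b t n)) (hyperfilter ℕ : Filter ℕ) (𝓝 0) := by
    intro t x
    have := (hv t x).sub_const (inner ℝ (v t) x)
    rw [sub_self] at this
    refine this.congr fun n => ?_
    rw [← real_inner_comm x, ← inner_sub_left]
  obtain ⟨σ, -, hσ⟩ := exists_seq_of_forall_finset_exists (fun _ : ℕ => True)
    (fun x y => x < y ∧ ∀ t ≤ x, |inner ℝ (b t x) (b t y)| ≤ 1 / ((x : ℝ) + 1)) (by
      intro s _
      have h1 : ∀ x ∈ s, ∀ᶠ y in (hyperfilter ℕ : Filter ℕ),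
          x < y ∧ ∀ t ≤ x, |inner ℝ (b t x) (b t y)| ≤ 1 / ((x : ℝ) + 1) := by
        intro x _
        have h2 : ∀ᶠ y in (hyperfilter ℕ : Filter ℕ), x < y :=
          (Nat.hyperfilter_le_atTop) (eventually_gt_atTop x)
        have h3 : ∀ᶠ y in (hyperfilter ℕ : Filter ℕ), ∀ t ∈ Finset.range (x + 1),
            |inner ℝ (b t x) (b t y)| ≤ 1 / ((x : ℝ) + 1) := by
          rw [Filter.eventually_all_finset]
          intro t _
          have h4 := (hlim t (b t x)).abs
          rw [abs_zero] at h4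
          exact (h4.eventually (gt_mem_nhds (show (0 : ℝ) < 1 / ((x : ℝ) + 1) by positivity))).mono
            fun _ h => h.le
        filter_upwards [h2, h3] with y h4 h5
        exact ⟨h4, fun t ht => h5 t (Finset.mem_range.2 (Nat.lt_succ_of_le ht))⟩
      obtain ⟨y, hy⟩ := ((Filter.eventually_all_finset s).2 h1).exists
      exact ⟨y, trivial, hy⟩)
  refine ⟨σ, fun i j hij => (hσ i j hij).1, ?_⟩
  intro τ hτ t
  have hmono : StrictMono (fun i => σ (τ i)) := fun i j hij => (hσ _ _ (hτ hij)).1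
  have key := hilb_cesaro (b := fun k => b t (σ (τ k))) (C := C t + ‖v t‖) (fun n => hb _ _)
    (w := fun i => if i < t then (C t + ‖v t‖) ^ 2 else 1 / ((i : ℝ) + 1))
    (fun i => by split_ifs <;> positivity)
    (by
      refine (tendsto_one_div_add_atTop_nhds_zero_nat (𝕜 := ℝ)).congr' ?_
      filter_upwards [eventually_ge_atTop t] with i hi
      rw [if_neg (not_lt.2 hi)])
    (by
      intro i j hij
      split_ifs with hi
      · refine (abs_real_inner_le_norm _ _).trans ?_
        rw [pow_two]
        exact mul_le_mul (hb _ _) (hb _ _) (norm_nonneg _) ((norm_nonneg _).trans (hb t 0))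
      · have h1 : i ≤ σ (τ i) := hmono.le_apply
        refine ((hσ _ _ (hτ hij)).2 t ((not_lt.1 hi).trans h1)).trans ?_
        gcongr)
  have h2 := key.add_const (v t)
  rw [zero_add] at h2
  refine h2.congr' ?_
  filter_upwards [eventually_gt_atTop 0] with n hn
  have hn' : (n : ℝ) ≠ 0 := by exact_mod_cast hn.ne'
  simp only [b]
  rw [Finset.sum_sub_distrib, Finset.sum_const, Finset.card_range, smul_sub, ← Nat.cast_smul_eq_nsmul ℝ,
    smul_smul, inv_mul_cancel₀ hn', one_smul, sub_add_cancel]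

end Hilbert

section Scalar
variable {Ω : Type*} [MeasurableSpace Ω] {η : Measure Ω}

theorem integral_sgnMul {P : Set Ω} (hP : MeasurableSet P) {f : Ω → ℝ} (hf : Integrable f η) :
    ∫ ω, sgnMul P f ω ∂η = ∫ ω in Pᶜ, f ω ∂η - ∫ ω in P, f ω ∂η := by
  have h1 : ∀ ω, sgnMul P f ω = Pᶜ.indicator f ω - P.indicator f ω := by
    intro ω
    simp [sgnMul, sub_eq_add_neg]
  simp_rw [h1]
  rw [integral_sub (hf.indicator hP.compl) (hf.indicator hP), integral_indicator hP.compl,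
    integral_indicator hP]

theorem sgnMul_mul (P : Set Ω) (f g : Ω → ℝ) (ω : Ω) :
    sgnMul P f ω * g ω = sgnMul P (fun ω => f ω * g ω) ω := by
  by_cases h : ω ∈ P
  · rw [sgnMul_of_mem h, sgnMul_of_mem h]; ring
  · rw [sgnMul_of_notMem h, sgnMul_of_notMem h]

theorem exists_sgn [IsFiniteMeasure η] : ∃ K : ℝ, 0 ≤ K ∧ ∀ f : Lp ℝ 2 η, ∃ P : Set Ω,
    MeasurableSet P ∧ ∃ s : Lp ℝ 2 η, ‖s‖ ≤ K ∧ inner ℝ f s = ∫ ω, |f ω| ∂η ∧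
      ∀ g : Lp ℝ 2 η, inner ℝ g s = ∫ ω, sgnMul P g ω ∂η := by
  refine ⟨(measureUnivNNReal η : ℝ) ^ ((2 : ℝ≥0∞).toReal)⁻¹ * 1, by positivity, fun f => ?_⟩
  have hfm : Measurable f := (Lp.stronglyMeasurable f).measurable
  let P : Set Ω := {ω | f ω < 0}
  have hP : MeasurableSet P := measurableSet_lt hfm measurable_const
  let u : Ω → ℝ := sgnMul P (fun _ => 1)
  have hum : Measurable u := (measurable_const.indicator hP.compl).add
    ((measurable_const.indicator hP).const_smul _)
  have hub : ∀ ω, ‖u ω‖ ≤ 1 := fun ω => by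
    rw [Real.norm_eq_abs, abs_sgnMul, abs_one]
  have hu : MemLp u 2 η := MemLp.of_bound hum.aestronglyMeasurable 1 (Eventually.of_forall hub)
  have hs := hu.coeFn_toLp
  have hin : ∀ g : Lp ℝ 2 η, inner ℝ g (hu.toLp u) = ∫ ω, sgnMul P g ω ∂η := by
    intro g
    rw [L2.inner_def]
    refine integral_congr_ae ?_
    filter_upwards [hs] with ω hω
    rw [hω]
    have : inner ℝ (g ω) (u ω) = u ω * g ω := by simp
    rw [this, sgnMul_mul]
    simp
  refine ⟨P, hP, hu.toLp u, ?_, ?_, hin⟩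
  · refine Lp.norm_le_of_ae_bound zero_le_one ?_
    filter_upwards [hs] with ω hω
    rw [hω]; exact hub ω
  · rw [hin, sgnMul_self]

def trunc (t : ℕ) (f : Ω → ℝ) : Ω → ℝ := {ω | |f ω| ≤ t}.indicator f

theorem trunc_meas {f : Ω → ℝ} (hf : Measurable f) (t : ℕ) : MeasurableSet {ω | |f ω| ≤ t} :=
  measurableSet_le hf.abs measurable_const

theorem measurable_trunc {f : Ω → ℝ} (hf : Measurable f) (t : ℕ) : Measurable (trunc t f) :=
  hf.indicator (trunc_meas hf t)

theorem abs_trunc_le (t : ℕ) (f : Ω → ℝ) (ω : Ω) : |trunc t f ω| ≤ t := by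
  by_cases h : |f ω| ≤ t
  · rw [trunc, Set.indicator_of_mem (by exact h)]; exact h
  · rw [trunc, Set.indicator_of_notMem (by exact h)]; simp

theorem abs_sub_trunc (t : ℕ) (f : Ω → ℝ) (ω : Ω) :
    |f ω - trunc t f ω| = {ω | |f ω| ≤ t}ᶜ.indicator (fun ω => |f ω|) ω := by
  by_cases h : |f ω| ≤ t
  · rw [trunc, Set.indicator_of_mem (by exact h), Set.indicator_of_notMem]
    · simp
    · exact fun h2 => h2 h
  · rw [trunc, Set.indicator_of_notMem (by exact h), Set.indicator_of_mem (by exact h)]; simp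

theorem scalar [IsFiniteMeasure η] {g : ℕ → Ω → ℝ} (hgm : ∀ n, Measurable (g n))
    (hgi : ∀ n, Integrable (g n) η) {C : ℝ} (hC : ∀ n, ∫ ω, |g n ω| ∂η ≤ C)
    (hUI : ∀ ε : ℝ, 0 < ε → ∃ δ : ℝ, 0 < δ ∧ ∀ A : Set Ω, MeasurableSet A →
      η A < ENNReal.ofReal δ → ∀ n, ∫ ω in A, |g n ω| ∂η ≤ ε)
    (hlim : ∀ A : Set Ω, MeasurableSet A → Tendsto (fun n => ∫ ω in A, g n ω ∂η) atTop (𝓝 0)) :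
    ∃ σ : ℕ → ℕ, StrictMono σ ∧ ∀ τ : ℕ → ℕ, StrictMono τ →
      Tendsto (fun n : ℕ => ∫ ω, |((n : ℝ)⁻¹ • ∑ k ∈ Finset.range n, g (σ (τ k))) ω| ∂η)
        atTop (𝓝 0) := by
  obtain ⟨K, hK0, hK⟩ := exists_sgn (η := η)
  have hmem : ∀ t n, MemLp (trunc t (g n)) 2 η := fun t n =>
    MemLp.of_bound (measurable_trunc (hgm n) t).aestronglyMeasurable t
      (Eventually.of_forall fun ω => abs_trunc_le t _ ω)
  have hti : ∀ t n, Integrable (trunc t (g n)) η := fun t n =>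
    (hgi n).indicator (trunc_meas (hgm n) t)
  let a : ℕ → ℕ → Lp ℝ 2 η := fun t n => (hmem t n).toLp _
  have ha : ∀ t n, a t n =ᵐ[η] trunc t (g n) := fun t n => (hmem t n).coeFn_toLp
  obtain ⟨v, hv, σ, hσ, hces⟩ := hilb (a := a)
    (C := fun t => (measureUnivNNReal η : ℝ) ^ ((2 : ℝ≥0∞).toReal)⁻¹ * t) (by
      intro t n
      refine Lp.norm_le_of_ae_bound (Nat.cast_nonneg t) ?_
      filter_upwards [ha t n] with ω hω
      rw [hω]; exact abs_trunc_le t _ ω)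
  refine ⟨σ, hσ, fun τ hτ => ?_⟩
  rw [Metric.tendsto_atTop]
  intro ε hε
  obtain ⟨δ, hδ, hδ'⟩ := hUI (ε / 4) (by positivity)
  -- choose the truncation level
  obtain ⟨t, ht⟩ := exists_nat_gt (C / δ)
  have hC0 : 0 ≤ C := (integral_nonneg fun _ => abs_nonneg _).trans (hC 0)
  have ht0 : (0 : ℝ) < t := lt_of_le_of_lt (by positivity) ht
  have hrest : ∀ n, ∫ ω, |g n ω - trunc t (g n) ω| ∂η ≤ ε / 4 := by
    intro n
    simp_rw [abs_sub_trunc]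
    rw [integral_indicator (trunc_meas (hgm n) t).compl]
    refine hδ' _ (trunc_meas (hgm n) t).compl ?_ n
    have h1 := mul_meas_ge_le_integral_of_nonneg (μ := η) (f := fun ω => |g n ω|)
      (Eventually.of_forall fun _ => abs_nonneg _) (hgi n).abs t
    have h2 : η.real {ω | |g n ω| ≤ t}ᶜ ≤ η.real {ω | (t : ℝ) ≤ |g n ω|} :=
      measureReal_mono (fun ω hω => by
        change ¬ (|g n ω| ≤ t) at hω
        change (t : ℝ) ≤ |g n ω|
        exact (not_le.1 hω).le)
    have h3 : (t : ℝ) * η.real {ω | |g n ω| ≤ t}ᶜ ≤ C :=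
      (mul_le_mul_of_nonneg_left h2 ht0.le).trans (h1.trans (hC n))
    have h4 : η.real {ω | |g n ω| ≤ t}ᶜ < δ := by
      rw [div_lt_iff₀ hδ] at ht
      by_contra h5
      have := mul_le_mul_of_nonneg_left (not_lt.1 h5) ht0.le
      linarith
    exact (ENNReal.lt_ofReal_iff_toReal_lt (measure_ne_top _ _)).2 h4
  have hvt : ∫ ω, |v t ω| ∂η ≤ ε / 4 := by
    obtain ⟨P, hP, s, -, hs, hs'⟩ := hK (v t)
    have h1 := hv t s
    rw [hs] at h1
    have h2 : Tendsto (fun n => ∫ ω, sgnMul P (g n) ω ∂η) (hyperfilter ℕ : Filter ℕ) (𝓝 0) := by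
      have h3 := (hlim Pᶜ hP.compl).sub (hlim P hP)
      rw [sub_zero] at h3
      refine (h3.congr fun n => ?_).mono_left Nat.hyperfilter_le_atTop
      rw [integral_sgnMul hP (hgi n)]
    have h3 := h1.sub h2
    rw [sub_zero] at h3
    refine le_of_tendsto h3 (Eventually.of_forall fun n => ?_)
    rw [hs']
    have h4 : ∫ ω, sgnMul P (a t n) ω ∂η = ∫ ω, sgnMul P (trunc t (g n)) ω ∂η := by
      refine integral_congr_ae ?_
      filter_upwards [ha t n] with ω hω
      by_cases h : ω ∈ P
      · rw [sgnMul_of_mem h, sgnMul_of_mem h, hω]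
      · rw [sgnMul_of_notMem h, sgnMul_of_notMem h, hω]
    have hsi : ∀ {f : Ω → ℝ}, Integrable f η → Integrable (sgnMul P f) η := fun hf =>
      (hf.indicator hP.compl).add ((hf.indicator hP).smul _)
    rw [h4, ← integral_sub (hsi (hti t n)) (hsi (hgi n))]
    refine (le_abs_self _).trans (abs_integral_le_integral_abs.trans ((integral_congr_ae ?_).trans_le (hrest n)))
    refine Eventually.of_forall fun ω => ?_
    by_cases h : ω ∈ P
    · simp only [sgnMul_of_mem h]; congr 1; ring
    · simp only [sgnMul_of_notMem h]; rw [abs_sub_comm]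
  have hconv := hces τ hτ t
  rw [tendsto_iff_norm_sub_tendsto_zero] at hconv
  have hev := hconv.eventually (gt_mem_nhds (show (0 : ℝ) < ε / (4 * (K + 1)) by positivity))
  obtain ⟨N, hN⟩ := eventually_atTop.1 hev
  refine ⟨N, fun n hn => ?_⟩
  have hn1 := hN n hn
  set F : Lp ℝ 2 η := (n : ℝ)⁻¹ • ∑ k ∈ Finset.range n, a t (σ (τ k)) - v t with hF
  have hFi : ∫ ω, |F ω| ∂η ≤ ε / 4 := by
    obtain ⟨P, hP, s, hsK, hs, -⟩ := hK F
    rw [← hs]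
    refine (real_inner_le_norm _ _).trans ?_
    have h1 : ‖F‖ * ‖s‖ ≤ ε / (4 * (K + 1)) * K := by gcongr
    refine h1.trans ?_
    rw [div_mul_eq_mul_div, div_le_div_iff₀ (by positivity) (by positivity)]
    nlinarith
  let An : Ω → ℝ := (n : ℝ)⁻¹ • ∑ k ∈ Finset.range n, g (σ (τ k))
  let R : Ω → ℝ := fun ω => (n : ℝ)⁻¹ * ∑ k ∈ Finset.range n,
    |g (σ (τ k)) ω - trunc t (g (σ (τ k))) ω|
  have hRi' : ∀ k, Integrable (fun ω => |g k ω - trunc t (g k) ω|) η := fun k =>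
    ((hgi k).sub (hti t k)).abs
  have hRi : Integrable R η := (integrable_finsetSum _ fun k _ => hRi' _).const_mul _
  have hR : ∫ ω, R ω ∂η ≤ ε / 4 := by
    simp only [R]
    rw [integral_const_mul, integral_finsetSum _ fun k _ => hRi' _]
    rcases Nat.eq_zero_or_pos n with rfl | hn0
    · simp; positivity
    · have hn' : (0 : ℝ) < n := by exact_mod_cast hn0
      rw [inv_mul_le_iff₀ hn']
      refine (Finset.sum_le_card_nsmul _ _ (ε / 4) fun k _ => hrest _).trans ?_
      simp
  have hFae : F =ᵐ[η] fun ω => (n : ℝ)⁻¹ * (∑ k ∈ Finset.range n, trunc t (g (σ (τ k))) ω) - v t ω := by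
    have h1 := Lp.coeFn_sub ((n : ℝ)⁻¹ • ∑ k ∈ Finset.range n, a t (σ (τ k))) (v t)
    have h2 := Lp.coeFn_smul (n : ℝ)⁻¹ (∑ k ∈ Finset.range n, a t (σ (τ k)))
    have h3 : ∀ M : ℕ, ⇑(∑ k ∈ Finset.range M, a t (σ (τ k))) =ᵐ[η]
        fun ω => ∑ k ∈ Finset.range M, trunc t (g (σ (τ k))) ω := by
      intro M
      induction M with
      | zero =>
        filter_upwards [Lp.coeFn_zero ℝ 2 η] with ω hω
        simpa using hω
      | succ M ih =>
        rw [Finset.sum_range_succ]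
        filter_upwards [ih, Lp.coeFn_add (∑ k ∈ Finset.range M, a t (σ (τ k))) (a t (σ (τ M))),
          ha t (σ (τ M))] with ω k1 k2 k3
        rw [k2, Pi.add_apply, k1, k3, Finset.sum_range_succ]
    filter_upwards [h1, h2, h3 n] with ω k1 k2 k3
    rw [hF, k1, Pi.sub_apply, k2, Pi.smul_apply, k3, smul_eq_mul]
  have hFint : Integrable (fun ω => |F ω|) η := ((Lp.memLp F).integrable (by norm_num)).abs
  have hvint : Integrable (fun ω => |v t ω|) η := ((Lp.memLp (v t)).integrable (by norm_num)).abs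
  have hle : ∫ ω, |An ω| ∂η ≤ ∫ ω, (|F ω| + |v t ω| + R ω) ∂η := by
    refine integral_mono_ae ?_ ((hFint.add hvint).add hRi) ?_
    · exact ((integrable_finsetSum' _ fun k _ => hgi _).smul _).abs
    · filter_upwards [hFae] with ω hω
      have h1 : An ω = F ω + v t ω + (n : ℝ)⁻¹ * ∑ k ∈ Finset.range n,
          (g (σ (τ k)) ω - trunc t (g (σ (τ k))) ω) := by
        simp only [An]
        rw [hω, Finset.sum_sub_distrib, Pi.smul_apply, Finset.sum_apply, smul_eq_mul]
        ring
      rw [h1]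
      refine (abs_add_three _ _ _).trans ?_
      gcongr
      simp only [R]
      rw [abs_mul, abs_of_nonneg (show (0 : ℝ) ≤ (n : ℝ)⁻¹ by positivity)]
      gcongr
      exact Finset.abs_sum_le_sum_abs _ _
  have hsp : ∫ ω, (|F ω| + |v t ω| + R ω) ∂η = ∫ ω, |F ω| ∂η + ∫ ω, |v t ω| ∂η + ∫ ω, R ω ∂η := by
    rw [← integral_add hFint hvint]
    exact integral_add (hFint.add hvint) hRi
  rw [hsp] at hle
  rw [Real.dist_eq, sub_zero, abs_of_nonneg (integral_nonneg fun _ => abs_nonneg _)]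
  change ∫ ω, |An ω| ∂η < ε
  linarith

end Scalar

section UBP

theorem ubp_aux {E : Type*} [SeminormedAddCommGroup E] [NormedSpace ℝ E] (f : ℕ → E)
    (h : ∀ T : E →L[ℝ] ℝ, ∃ C : ℝ, ∀ n, |T (f n)| ≤ C) : ∃ C : ℝ, ∀ n, ‖f n‖ ≤ C := by
  obtain ⟨C, hC⟩ := banach_steinhaus
    (g := fun n => (ContinuousLinearMap.apply ℝ ℝ (f n) : (E →L[ℝ] ℝ) →L[ℝ] ℝ)) (fun T => by
      obtain ⟨C, hC⟩ := h T
      exact ⟨C, fun n => by simpa using hC n⟩)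
  refine ⟨C, fun n => ?_⟩
  obtain ⟨y, hy1, hy2⟩ := exists_dual_vector'' ℝ (f n)
  have h1 := (ContinuousLinearMap.apply ℝ ℝ (f n) : (E →L[ℝ] ℝ) →L[ℝ] ℝ).le_opNorm y
  have h2 : (ContinuousLinearMap.apply ℝ ℝ (f n) : (E →L[ℝ] ℝ) →L[ℝ] ℝ) y = ‖f n‖ := hy2
  rw [h2, norm_norm] at h1
  have h3 := hC n
  have h4 := norm_nonneg (ContinuousLinearMap.apply ℝ ℝ (f n) : (E →L[ℝ] ℝ) →L[ℝ] ℝ)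
  exact h1.trans ((mul_le_of_le_one_right h4 hy1).trans h3)

theorem ubp {E : Type*} [AddCommGroup E] [Module ℝ E] (p : Seminorm ℝ E) (f : ℕ → E)
    (h : ∀ T : E →ₗ[ℝ] ℝ, (∃ C : ℝ, ∀ x, |T x| ≤ C * p x) → ∃ C : ℝ, ∀ n, |T (f n)| ≤ C) :
    ∃ C : ℝ, ∀ n, p (f n) ≤ C := by
  let i1 : SeminormedAddCommGroup E := AddGroupSeminorm.toSeminormedAddCommGroup p.toAddGroupSeminorm
  let i2 : NormedSpace ℝ E := ⟨fun a b => (map_smul_eq_mul p a b).le⟩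
  exact ubp_aux f fun T => h T.toLinearMap ⟨‖T‖, fun x => T.le_opNorm x⟩

end UBP

section LemI
variable {S : Type*} [MeasurableSpace S] {μ : Measure S}
variable {X : Type*} [NormedAddCommGroup X] [NormedSpace ℝ X]
variable {Ω : Type*} [MeasurableSpace Ω]
variable {B : BFS S μ X} {B' : BFS S μ (X →L[ℝ] ℝ)} {m : VectorMeasure Ω X}

def LM (m : VectorMeasure Ω X) : Submodule ℝ (Ω → ℝ) where
  carrier := {f | MIntegrable m f}
  add_mem' := fun ha hb => MIntegrable.add ha hb
  zero_mem' := MIntegrable.zero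
  smul_mem' := fun r _ hf => MIntegrable.smul r hf

theorem Ctx.bdd_of_weaklyNull (c : Ctx B B' m) {f : ℕ → Ω → ℝ} (hf : ∀ n, MIntegrable m (f n))
    (hw : WeaklyNullSeq (MIntegrable m) (mNorm m) f) : ∃ C : ℝ, ∀ n, mNorm m (f n) ≤ C := by
  classical
  let p : Seminorm ℝ (LM m) := Seminorm.of (fun f => mNorm m f.1)
    (fun f g => c.mNorm_add_le f.2 g.2) (fun r f => c.mNorm_smul r f.2)
  refine ubp p (fun n => ⟨f n, hf n⟩) ?_
  rintro T ⟨C, hC⟩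
  let T' : (Ω → ℝ) → ℝ := fun g => if h : MIntegrable m g then T ⟨g, h⟩ else 0
  have hT' : ∀ g (h : MIntegrable m g), T' g = T ⟨g, h⟩ := fun g h => dif_pos h
  have hb := hw T' ⟨fun g h hg hh => by
      rw [hT' _ hg, hT' _ hh, hT' _ (hg.add hh), ← map_add]; rfl,
    fun r g hg => by
      rw [hT' _ hg, hT' _ (hg.smul r), ← smul_eq_mul, ← map_smul]; rfl,
    C, fun g hg => by rw [hT' _ hg]; exact hC ⟨g, hg⟩⟩
  obtain ⟨K, hK⟩ := (Metric.isBounded_range_of_tendsto _ hb).exists_norm_le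
  refine ⟨K, fun n => ?_⟩
  have : ‖T' (f n)‖ ≤ K := hK _ ⟨n, rfl⟩
  rwa [hT' _ (hf n)] at this

theorem Ctx.cesaro_bound (c : Ctx B B' m) {g : ℕ → Ω → ℝ} (hg : ∀ n, MIntegrable m (g n)) {C : ℝ}
    (hC0 : 0 ≤ C) (hC : ∀ n, mNorm m (g n) ≤ C) (n : ℕ) :
    mNorm m ((n : ℝ)⁻¹ • ∑ k ∈ Finset.range n, g k) ≤ C := by
  rw [c.mNorm_smul _ (MIntegrable.sum _ fun k _ => hg k), abs_of_nonneg (by positivity)]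
  rcases Nat.eq_zero_or_pos n with rfl | hn0
  · simpa using hC0
  · have hn' : (0 : ℝ) < n := by exact_mod_cast hn0
    rw [inv_mul_le_iff₀ hn']
    refine (c.mNorm_sum_le _ hg).trans ?_
    refine (Finset.sum_le_card_nsmul _ _ C fun k _ => hC _).trans ?_
    simp

theorem indicator_cesaro (A : Set Ω) (r : ℝ) (s : Finset ℕ) (g : ℕ → Ω → ℝ) :
    A.indicator (r • ∑ k ∈ s, g k) = r • ∑ k ∈ s, A.indicator (g k) := by
  ext ω
  by_cases h : ω ∈ A <;> simp [h]

theorem Ctx.lemI (c : Ctx B B' m) {x₀ : X →L[ℝ] ℝ} {g : ℕ → Ω → ℝ}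
    (hg : ∀ n, MIntegrable m (g n)) {C : ℝ} (hC : ∀ n, mNorm m (g n) ≤ C)
    (hU : UnifACNorm (dualApply m x₀).totalVariation (mNorm m) (Set.range g))
    (hlim : ∀ A : Set Ω, MeasurableSet A →
      Tendsto (fun n => ∫ ω in A, g n ω ∂(dualApply m x₀).totalVariation) atTop (𝓝 0)) :
    ∃ σ : ℕ → ℕ, StrictMono σ ∧ ∀ τ : ℕ → ℕ, StrictMono τ →
      Tendsto (fun n : ℕ => mNorm m ((n : ℝ)⁻¹ • ∑ k ∈ Finset.range n, g (σ (τ k))))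
        atTop (𝓝 0) := by
  set η := (dualApply m x₀).totalVariation with hη
  have hle : ∀ f, MIntegrable m f → ∫ ω, |f ω| ∂η ≤ ‖x₀‖ * mNorm m f := fun f hf => by
    rw [c.mNorm_eq hf]; exact c.integral_tv_le hf x₀
  obtain ⟨σ, hσ, hσ'⟩ := scalar (η := η) (g := g) (fun n => (hg n).1) (fun n => (hg n).2.1 x₀)
    (C := ‖x₀‖ * C) (fun n => (hle _ (hg n)).trans (by gcongr; exact hC n)) (by
      intro ε hε
      obtain ⟨δ, hδ, h⟩ := hU (ε / (‖x₀‖ + 1)) (by positivity)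
      refine ⟨δ, hδ, fun A hA hAδ n => ?_⟩
      have h1 := h A hA hAδ _ ⟨n, rfl⟩
      have h2 := hle _ ((hg n).indicator hA)
      have h3 : ∫ ω in A, |g n ω| ∂η = ∫ ω, |A.indicator (g n) ω| ∂η := by
        rw [← integral_indicator hA]
        congr 1
        ext ω
        by_cases h : ω ∈ A <;> simp [h]
      rw [h3]
      refine h2.trans ?_
      have h4 : ‖x₀‖ * mNorm m (A.indicator (g n)) ≤ ‖x₀‖ * (ε / (‖x₀‖ + 1)) := by gcongr
      refine h4.trans ?_
      rw [mul_div_assoc', div_le_iff₀ (by positivity)]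
      nlinarith) hlim
  refine ⟨σ, hσ, fun τ hτ => ?_⟩
  have h0 := hσ' τ hτ
  rw [Metric.tendsto_atTop]
  intro ε hε
  obtain ⟨δ, hδ, hδ'⟩ := hU (ε / 3) (by positivity)
  set M := mNorm m (fun _ : Ω => (1 : ℝ)) with hM
  have hM0 : 0 ≤ M := mNorm_nonneg _
  let θ : ℝ := ε / (3 * (M + 1))
  have hθ : 0 < θ := by positivity
  obtain ⟨N, hN⟩ := eventually_atTop.1 (h0.eventually (gt_mem_nhds (show 0 < θ * δ by positivity)))
  refine ⟨N, fun n hn => ?_⟩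
  have hn1 := hN n hn
  set An : Ω → ℝ := (n : ℝ)⁻¹ • ∑ k ∈ Finset.range n, g (σ (τ k)) with hAn
  have hAi : MIntegrable m An := (MIntegrable.sum _ fun k _ => hg _).smul _
  let A : Set Ω := {ω | θ ≤ |An ω|}
  have hA : MeasurableSet A := measurableSet_le measurable_const hAi.1.abs
  have hAδ : η A < ENNReal.ofReal δ := by
    have h1 := mul_meas_ge_le_integral_of_nonneg (μ := η) (f := fun ω => |An ω|)
      (Eventually.of_forall fun _ => abs_nonneg _) (hAi.2.1 x₀).abs θ
    have h2 : θ * η.real A < θ * δ := lt_of_le_of_lt h1 hn1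
    exact (ENNReal.lt_ofReal_iff_toReal_lt (measure_ne_top _ _)).2 (lt_of_mul_lt_mul_left h2 hθ.le)
  have b1 : mNorm m (A.indicator An) ≤ ε / 3 := by
    rw [hAn, indicator_cesaro]
    exact c.cesaro_bound (g := fun k => A.indicator (g (σ (τ k)))) (fun k => (hg _).indicator hA)
      (by positivity) (fun k => hδ' A hA hAδ _ ⟨_, rfl⟩) n
  have b2 : mNorm m (Aᶜ.indicator An) ≤ θ * M := by
    have h1 : mNorm m (θ • (fun _ : Ω => (1 : ℝ))) = θ * M := by
      rw [c.mNorm_smul _ (MIntegrable.const 1), abs_of_pos hθ]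
    rw [← h1]
    refine c.mNorm_mono (hAi.indicator hA.compl) ((MIntegrable.const 1).smul θ) fun ω => ?_
    by_cases h : ω ∈ A
    · rw [Set.indicator_of_notMem (Set.notMem_compl_iff.2 h)]; simp
    · rw [Set.indicator_of_mem (by exact h)]
      have h2 : |An ω| < θ := not_le.1 h
      simpa [abs_of_pos hθ] using h2.le
  have b3 : θ * M ≤ ε / 3 := by
    simp only [θ]
    rw [div_mul_eq_mul_div, div_le_div_iff₀ (by positivity) (by positivity)]
    nlinarith
  have b4 : mNorm m An ≤ mNorm m (A.indicator An) + mNorm m (Aᶜ.indicator An) := by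
    have := c.mNorm_add_le (hAi.indicator hA) (hAi.indicator hA.compl)
    rwa [Set.indicator_self_add_compl] at this
  rw [Real.dist_eq, sub_zero, abs_of_nonneg (mNorm_nonneg _)]
  linarith

end LemI

section Final
variable {S : Type*} [MeasurableSpace S] {μ : Measure S}
variable {X : Type*} [NormedAddCommGroup X] [NormedSpace ℝ X]
variable {Ω : Type*} [MeasurableSpace Ω]
variable {B : BFS S μ X} {B' : BFS S μ (X →L[ℝ] ℝ)} {m : VectorMeasure Ω X}

theorem Ctx.bdd_setIntegral (c : Ctx B B' m) (x₀ : X →L[ℝ] ℝ) (A : Set Ω) :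
    IsBddLinFunctional (MIntegrable m) (mNorm m)
      (fun f => ∫ ω in A, f ω ∂(dualApply m x₀).totalVariation) := by
  refine ⟨fun f g hf hg => integral_add (hf.2.1 x₀).integrableOn (hg.2.1 x₀).integrableOn,
    fun r f hf => ?_, ‖x₀‖, fun f hf => ?_⟩
  · simp only [Pi.smul_apply, smul_eq_mul]
    exact integral_const_mul _ _
  · rw [c.mNorm_eq hf]
    refine le_trans ?_ (c.integral_tv_le hf x₀)
    refine abs_integral_le_integral_abs.trans ?_
    exact setIntegral_le_integral (hf.2.1 x₀).abs (Eventually.of_forall fun _ => abs_nonneg _)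

theorem Ctx.bdd_sgn (c : Ctx B B' m) (x : X →L[ℝ] ℝ) {P : Set Ω} (hP : MeasurableSet P) :
    IsBddLinFunctional (MIntegrable m) (mNorm m) (fun f => x (II m (sgnMul P f))) := by
  refine ⟨fun f g hf hg => ?_, fun r f hf => ?_, ‖x‖, fun f hf => ?_⟩
  · dsimp only
    rw [sgnMul_add, II_add (hf.sgnMul hP) (hg.sgnMul hP), map_add]
  · dsimp only
    rw [sgnMul_smul, II_smul _ (hf.sgnMul hP), map_smul, smul_eq_mul]
  · refine (x.le_opNorm _).trans ?_
    gcongr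
    refine (c.norm_II_le (hf.sgnMul hP)).trans ?_
    exact c.mNorm_mono (hf.sgnMul hP) hf fun ω => (abs_sgnMul P f ω).le

theorem functional_cesaro {T : (Ω → ℝ) → ℝ} (hT : IsBddLinFunctional (MIntegrable m) (mNorm m) T)
    {g : ℕ → Ω → ℝ} (hg : ∀ n, MIntegrable m (g n)) (n : ℕ) :
    T ((n : ℝ)⁻¹ • ∑ k ∈ Finset.range n, g k) = (n : ℝ)⁻¹ * ∑ k ∈ Finset.range n, T (g k) := by
  rw [hT.2.1 _ _ (MIntegrable.sum _ fun k _ => hg k)]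
  congr 1
  induction n with
  | zero =>
    have := hT.2.1 0 0 MIntegrable.zero
    simpa using this
  | succ n ih =>
    rw [Finset.sum_range_succ, Finset.sum_range_succ,
      hT.1 _ _ (MIntegrable.sum _ fun k _ => hg k) (hg n), ih]

theorem Ctx.weaklyNull_of_lim (c : Ctx B B' m) {x₀ : X →L[ℝ] ℝ} {g : ℕ → Ω → ℝ}
    (hg : ∀ n, MIntegrable m (g n)) {C : ℝ} (hC : ∀ n, mNorm m (g n) ≤ C)
    (hU : UnifACNorm (dualApply m x₀).totalVariation (mNorm m) (Set.range g))
    (hlim : ∀ A : Set Ω, MeasurableSet A →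
      Tendsto (fun n => ∫ ω in A, g n ω ∂(dualApply m x₀).totalVariation) atTop (𝓝 0)) :
    WeaklyNullSeq (MIntegrable m) (mNorm m) g := by
  intro T hT
  obtain ⟨K, hK⟩ := hT.2.2
  have hK' : ∀ f, MIntegrable m f → |T f| ≤ |K| * mNorm m f := fun f hf =>
    (hK f hf).trans (mul_le_mul_of_nonneg_right (le_abs_self K) (mNorm_nonneg f))
  refine tendsto_of_subseq_tendsto fun ns hns => ?_
  obtain ⟨L, -, φ, hφ, hL⟩ := tendsto_subseq_of_bounded
    (Metric.isBounded_closedBall (x := (0 : ℝ)) (r := |K| * C)) (x := fun n => T (g (ns n)))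
    (fun n => by
      rw [mem_closedBall_zero_iff, Real.norm_eq_abs]
      exact (hK' _ (hg _)).trans (by gcongr; exact hC _))
  have hφ' : Tendsto (fun n => ns (φ n)) atTop atTop := hns.comp hφ.tendsto_atTop
  obtain ⟨σ, hσ, hσ'⟩ := c.lemI (x₀ := x₀) (g := fun n => g (ns (φ n))) (fun n => hg _)
    (fun n => hC _)
    (fun ε hε => by
      obtain ⟨δ, hδ, h⟩ := hU ε hε
      refine ⟨δ, hδ, fun A hA hAδ f hf => h A hA hAδ f ?_⟩
      obtain ⟨n, rfl⟩ := hf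
      exact ⟨_, rfl⟩)
    (fun A hA => (hlim A hA).comp hφ')
  have h1 := hσ' id strictMono_id
  have h2 : Tendsto (fun n : ℕ => (n : ℝ)⁻¹ * ∑ k ∈ Finset.range n, T (g (ns (φ (σ k)))))
      atTop (𝓝 0) := by
    refine squeeze_zero_norm (fun n => ?_) (by simpa using h1.const_mul |K|)
    rw [← functional_cesaro hT (g := fun k => g (ns (φ (σ k)))) (fun k => hg _) n]
    exact hK' _ ((MIntegrable.sum _ fun k _ => hg _).smul _)
  have h3 := (hL.comp hσ.tendsto_atTop).cesaro
  have h4 : L = 0 := tendsto_nhds_unique h3 h2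
  exact ⟨φ, h4 ▸ hL⟩

theorem Ctx.lim_of_split (c : Ctx B B' m) {x₀ : X →L[ℝ] ℝ} {f : ℕ → Ω → ℝ}
    (hf : ∀ n, MIntegrable m (f n)) (hw : WeaklyNullSeq (MIntegrable m) (mNorm m) f)
    {D : ℕ → Set Ω} (hD : ∀ n, MeasurableSet (D n)) (hd : ∀ i j, i ≠ j → Disjoint (D i) (D j))
    (hU : UnifACNorm (dualApply m x₀).totalVariation (mNorm m)
      (Set.range fun n => (D n)ᶜ.indicator (f n)))
    {A : Set Ω} (hA : MeasurableSet A) :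
    Tendsto (fun n => ∫ ω in A, (D n)ᶜ.indicator (f n) ω ∂(dualApply m x₀).totalVariation)
      atTop (𝓝 0) := by
  set η := (dualApply m x₀).totalVariation with hη
  have hg : ∀ n, MIntegrable m ((D n)ᶜ.indicator (f n)) := fun n => (hf n).indicator (hD n).compl
  have hsum : ∑' i, η (D i) ≠ ∞ := by
    rw [← measure_iUnion (fun i j hij => hd i j hij) hD]
    exact measure_ne_top _ _
  rw [Metric.tendsto_atTop]
  intro ε hε
  obtain ⟨δ, hδ, hδ'⟩ := hU (ε / (2 * (‖x₀‖ + 1))) (by positivity)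
  obtain ⟨r, hr⟩ := ((tail_union hsum).eventually (gt_mem_nhds (ENNReal.ofReal_pos.2 hδ))).exists
  set U : Set Ω := ⋃ i, D (i + r) with hUdef
  have hUm : MeasurableSet U := MeasurableSet.iUnion fun i => hD _
  have hT := hw _ (c.bdd_setIntegral x₀ (A \ U))
  obtain ⟨N, hN⟩ := eventually_atTop.1
    (hT.abs.eventually (gt_mem_nhds (show |(0 : ℝ)| < ε / 2 by simpa using hε)))
  refine ⟨max N r, fun n hn => ?_⟩
  have hn1 := hN n ((le_max_left _ _).trans hn)
  have hn2 : r ≤ n := (le_max_right _ _).trans hn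
  have hDU : D n ⊆ U := by
    have : D n = D ((n - r) + r) := by congr 1; omega
    rw [this]
    exact Set.subset_iUnion (fun i => D (i + r)) (n - r)
  have e1 : ∫ ω in A \ U, (D n)ᶜ.indicator (f n) ω ∂η = ∫ ω in A \ U, f n ω ∂η := by
    refine setIntegral_congr_fun (hA.diff hUm) fun ω hω => ?_
    exact Set.indicator_of_mem (show ω ∈ (D n)ᶜ from fun h => hω.2 (hDU h)) _
  have e2 : ∫ ω in A ∩ U, (D n)ᶜ.indicator (f n) ω ∂η + ∫ ω in A \ U, (D n)ᶜ.indicator (f n) ω ∂η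
      = ∫ ω in A, (D n)ᶜ.indicator (f n) ω ∂η :=
    integral_inter_add_sdiff hUm ((hg n).2.1 x₀).integrableOn
  have e3 : |∫ ω in A ∩ U, (D n)ᶜ.indicator (f n) ω ∂η| ≤ ε / 2 := by
    have h1 := hδ' (A ∩ U) (hA.inter hUm) (lt_of_le_of_lt (measure_mono Set.inter_subset_right) hr)
      _ ⟨n, rfl⟩
    rw [← integral_indicator (hA.inter hUm)]
    refine abs_integral_le_integral_abs.trans ?_
    refine (c.integral_tv_le ((hg n).indicator (hA.inter hUm)) x₀).trans ?_
    rw [← c.mNorm_eq ((hg n).indicator (hA.inter hUm))]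
    have h4 : ‖x₀‖ * mNorm m ((A ∩ U).indicator ((D n)ᶜ.indicator (f n)))
        ≤ ‖x₀‖ * (ε / (2 * (‖x₀‖ + 1))) := by gcongr
    refine h4.trans ?_
    rw [mul_div_assoc', div_le_div_iff₀ (by positivity) (by positivity)]
    nlinarith
  rw [Real.dist_eq, sub_zero, ← e2, e1]
  refine (abs_add_le _ _).trans_lt ?_
  linarith

theorem Ctx.wbs [CompleteSpace X] [IsFiniteMeasure μ] (c : Ctx B B' m) (hWBS : WeakBanachSaks X)
    (hX : B.SSP)
    (hrange : B.UnifAC {x : X | ∃ A : Set Ω, MeasurableSet A ∧ m A = x})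
    {x₀ : X →L[ℝ] ℝ}
    (hRyb : ∀ A : Set Ω, MeasurableSet A →
      ((dualApply m x₀).totalVariation A = 0 ↔ semivar m A = 0)) :
    HasWBS (MIntegrable m) (mNorm m) := by
  intro f0 hf0 hw0
  obtain ⟨C, hC0⟩ := c.bdd_of_weaklyNull hf0 hw0
  obtain ⟨ρ, hρ, D, hD, hd, hU⟩ := c.ssp hWBS hX hrange hRyb hf0 hC0
  set f : ℕ → Ω → ℝ := fun n => f0 (ρ n) with hfdef
  have hf : ∀ n, MIntegrable m (f n) := fun n => hf0 _
  have hC : ∀ n, mNorm m (f n) ≤ C := fun n => hC0 _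
  have hw : WeaklyNullSeq (MIntegrable m) (mNorm m) f := fun T hT =>
    (hw0 T hT).comp hρ.tendsto_atTop
  let g : ℕ → Ω → ℝ := fun n => (D n)ᶜ.indicator (f n)
  let h : ℕ → Ω → ℝ := fun n => (D n).indicator (f n)
  have hg : ∀ n, MIntegrable m (g n) := fun n => (hf n).indicator (hD n).compl
  have hh : ∀ n, MIntegrable m (h n) := fun n => (hf n).indicator (hD n)
  have hgC : ∀ n, mNorm m (g n) ≤ C := fun n =>
    (c.mNorm_mono (hg n) (hf n) fun ω => by
      by_cases hω : ω ∈ D n <;> simp [g, hω]).trans (hC n)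
  have hfgh : ∀ n, f n = g n + h n := fun n => (Set.indicator_compl_add_self _ _).symm
  have hlim : ∀ A : Set Ω, MeasurableSet A →
      Tendsto (fun n => ∫ ω in A, g n ω ∂(dualApply m x₀).totalVariation) atTop (𝓝 0) :=
    fun A hA => c.lim_of_split hf hw hD hd hU hA
  have hgw := c.weaklyNull_of_lim hg hgC hU hlim
  have hhw : WeaklyNullSeq (MIntegrable m) (mNorm m) h := by
    intro T hT
    have h1 := (hw T hT).sub (hgw T hT)
    rw [sub_zero] at h1
    refine h1.congr fun n => ?_
    rw [hfgh n, hT.1 _ _ (hg n) (hh n)]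
    ring
  let P : Set Ω := ⋃ n, {ω | h n ω < 0}
  have hP : MeasurableSet P := MeasurableSet.iUnion fun n =>
    measurableSet_lt (hh n).1 measurable_const
  have hPh : ∀ n, sgnMul P (h n) = fun ω => |h n ω| := by
    intro n
    ext ω
    by_cases hω : ω ∈ P
    · rw [sgnMul_of_mem hω]
      obtain ⟨j, hj⟩ := Set.mem_iUnion.1 hω
      change h j ω < 0 at hj
      have hjD : ω ∈ D j := by
        by_contra hcon
        simp [h, hcon] at hj
      by_cases hjn : j = n
      · subst hjn; rw [abs_of_neg hj]
      · have : ω ∉ D n := fun hn => Set.disjoint_left.1 (hd j n hjn) hjD hn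
        simp [h, this]
    · rw [sgnMul_of_notMem hω, abs_of_nonneg]
      by_contra hcon
      exact hω (Set.mem_iUnion.2 ⟨n, not_le.1 hcon⟩)
  let H : ℕ → X := fun n => II m (fun ω => |h n ω|)
  have hH : ∀ φ : X →L[ℝ] ℝ, Tendsto (fun n => φ (H n)) atTop (𝓝 0) := by
    intro φ
    refine (hhw _ (c.bdd_sgn φ hP)).congr fun n => ?_
    simp only [hPh, H]
  obtain ⟨σ, hσ, hσ'⟩ := c.lemI hg hgC hU hlim
  obtain ⟨τ, hτ, hτ'⟩ := hWBS (fun n => H (σ n)) (fun φ => (hH φ).comp hσ.tendsto_atTop)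
  refine ⟨fun k => ρ (σ (τ k)), hρ.comp (hσ.comp hτ), ?_⟩
  have hlast := (hσ' τ hτ).add hτ'
  rw [add_zero] at hlast
  refine squeeze_zero (fun n => mNorm_nonneg _) (fun n => ?_) hlast
  have e1 : (n : ℝ)⁻¹ • ∑ k ∈ Finset.range n, f0 (ρ (σ (τ k)))
      = (n : ℝ)⁻¹ • ∑ k ∈ Finset.range n, g (σ (τ k))
        + (n : ℝ)⁻¹ • ∑ k ∈ Finset.range n, h (σ (τ k)) := by
    rw [← smul_add, ← Finset.sum_add_distrib]
    congr 1
    exact Finset.sum_congr rfl fun k _ => hfgh _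
  have hGs : MIntegrable m ((n : ℝ)⁻¹ • ∑ k ∈ Finset.range n, g (σ (τ k))) :=
    (MIntegrable.sum _ fun k _ => hg _).smul _
  have hHs : MIntegrable m ((n : ℝ)⁻¹ • ∑ k ∈ Finset.range n, h (σ (τ k))) :=
    (MIntegrable.sum _ fun k _ => hh _).smul _
  rw [e1]
  refine (c.mNorm_add_le hGs hHs).trans ?_
  gcongr
  rw [c.mNorm_eq hHs]
  have hsum : MIntegrable m ((n : ℝ)⁻¹ • ∑ k ∈ Finset.range n, fun ω => |h (σ (τ k)) ω|) :=
    (MIntegrable.sum _ fun k _ => (hh _).abs).smul _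
  have e2 : (n : ℝ)⁻¹ • ∑ k ∈ Finset.range n, H (σ (τ k))
      = II m ((n : ℝ)⁻¹ • ∑ k ∈ Finset.range n, fun ω => |h (σ (τ k)) ω|) := by
    rw [II_smul _ (MIntegrable.sum _ fun k _ => (hh _).abs), II_sum _ fun k _ => (hh _).abs]
  rw [e2]
  refine c.norm_II_mono hHs.abs hsum (fun _ => abs_nonneg _) fun ω => ?_
  simp only [Pi.smul_apply, Finset.sum_apply, smul_eq_mul]
  rw [abs_mul, abs_of_nonneg (show (0 : ℝ) ≤ (n : ℝ)⁻¹ by positivity)]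
  gcongr
  exact Finset.abs_sum_le_sum_abs _ _

theorem Ctx.hasSSP [CompleteSpace X] [IsFiniteMeasure μ] (c : Ctx B B' m) (hWBS : WeakBanachSaks X)
    (hX : B.SSP)
    (hrange : B.UnifAC {x : X | ∃ A : Set Ω, MeasurableSet A ∧ m A = x})
    {x₀ : X →L[ℝ] ℝ}
    (hRyb : ∀ A : Set Ω, MeasurableSet A →
      ((dualApply m x₀).totalVariation A = 0 ↔ semivar m A = 0)) :
    HasSSP ((dualApply m x₀).totalVariation) (MIntegrable m) (mNorm m) := by
  rintro f hf ⟨C, hC⟩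
  obtain ⟨ρ, hρ, D, hD, hd, hU⟩ := c.ssp hWBS hX hrange hRyb hf hC
  refine ⟨ρ, hρ, fun n => (D n)ᶜ.indicator (f (ρ n)), fun n => (D n).indicator (f (ρ n)),
    fun n => (hf _).indicator (hD n).compl, fun n => (hf _).indicator (hD n),
    fun n => (Set.indicator_compl_add_self _ _).symm, fun n => ?_, hU, fun i j hij => ?_⟩
  · refine Eventually.of_forall fun ω => ?_
    by_cases h : ω ∈ D n <;> simp [h]
  · refine Eventually.of_forall fun ω => ?_
    by_cases h : ω ∈ D i
    · have : ω ∉ D j := fun hn => Set.disjoint_left.1 (hd i j hij) h hn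
      simp [this]
    · simp [h]

end Final

/-- if `X` has the weak Banach-Saks property, `X` and `X*` have the subsequence
splitting property, `m` is separable and positive and the range of `m` has uniformly a.c.
norm in `X`, then `L¹(m)` has both the subsequence splitting property and the weak
Banach-Saks property. -/
theorem statement3
    {S : Type*} [MeasurableSpace S] {μ : Measure S} [IsFiniteMeasure μ]
    {X : Type*} [NormedAddCommGroup X] [NormedSpace ℝ X] [CompleteSpace X]
    (B : BFS S μ X)
    {Ω : Type*} [MeasurableSpace Ω] (m : VectorMeasure Ω X)
    (hWBS : WeakBanachSaks X)
    (hX : B.SSP)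
    (B' : BFS S μ (X →L[ℝ] ℝ))
    (hB'rep : ∀ (φ : X →L[ℝ] ℝ) (x : X), φ x = ∫ s, B.J x s * B'.J φ s ∂μ)
    (hXdual : B'.SSP)
    (hsep : SeparableVM m)
    (hpos : ∀ A : Set Ω, MeasurableSet A → ∀ᵐ s ∂μ, 0 ≤ B.J (m A) s)
    (hrange : B.UnifAC {x : X | ∃ A : Set Ω, MeasurableSet A ∧ m A = x})
    (x₀ : X →L[ℝ] ℝ)
    (hRyb : ∀ A : Set Ω, MeasurableSet A →
      ((dualApply m x₀).totalVariation A = 0 ↔ semivar m A = 0)) :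
    HasSSP ((dualApply m x₀).totalVariation) (MIntegrable m) (mNorm m) ∧
      HasWBS (MIntegrable m) (mNorm m) := by
  have c : Ctx B B' m := ⟨hB'rep, hpos⟩
  exact ⟨c.hasSSP hWBS hX hrange hRyb, c.wbs hWBS hX hrange hRyb⟩

end Paper
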